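/- arXiv:2601.12198 — 6 statements merged into one kernel-verified Lean document; each statement's English description precedes it below -/
import Mathlib

section
/- Let σ > 0, ρ ∈ (−1,1), and let Σ = σ²·[[1, ρ],[ρ, 1]]. Let μ be a Borel probability measure on ℝ² having density x ↦ g(xᵀΣ⁻¹x) with respect to Lebesgue measure for some nonnegative measurable g : [0,∞) → [0,∞). Then the pushforward of μ under the map x = (x₁,x₂) ↦ atanh(2x₁x₂/(x₁² + x₂²)) (defined μ-almost everywhere) is absolutely continuous with respect to Lebesgue measure on ℝ with density t ↦ (1/π)·sech(t − atanh ρ). -/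
/-!
The quadratic form of `Σ⁻¹` is diagonal in `x₁ + x₂`, `x₁ - x₂` (`quadForm_eq`), so a linear change
of variables `x = (a p + b q, a p - b q)` turns the law into one with density proportional to
`g (p² + q²)`, while the similarity measure becomes
`log |(a / b) (p / q)| = atanh ρ + log |p / q|`, where `a² / b² = (1 + ρ) / (1 - ρ)`.
For a rotation-invariant law the ratio `s = p / q` has density proportional to `1 / (1 + s²)`
(`lintegral_radial_mul_ratio`), and the logarithm of the absolute value of such a variable has
density proportional to `1 / cosh t` (`lintegral_cauchy_comp_log`). Hence the pushforward is
`K / cosh (t - atanh ρ)` for a constant `K` depending on `g`, and since the total mass is `1` and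
`∫ 1 / (1 + s²) ds = π`, the constant is `1 / π`.
-/

open MeasureTheory Matrix Real

lemma lintegral_eq_mul_comp_mul_left (f : ℝ → ENNReal) (a : ℝ) (ha : a ≠ 0) :
    ∫⁻ x, f x = ENNReal.ofReal |a| * ∫⁻ x, f (a * x) := by
  conv_lhs => rw [← Real.smul_map_volume_mul_left ha]
  rw [lintegral_smul_measure, smul_eq_mul]
  congr 1
  exact (Homeomorph.mulLeft₀ a ha).measurableEmbedding.lintegral_map f

/-- The ratio of the coordinates of a rotation-invariant law on `ℝ²` is Cauchy distributed, up to
a radial constant. Substituting `p = s q` and then `w = √(1 + s²) q` separates the variables. -/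
lemma lintegral_radial_mul_ratio (F h : ℝ → ENNReal) (hF : Measurable F) (hh : Measurable h) :
    ∫⁻ p : ℝ × ℝ, F (p.1 ^ 2 + p.2 ^ 2) * h (p.1 / p.2) =
      (∫⁻ w, ENNReal.ofReal |w| * F (w ^ 2)) *
        ∫⁻ s : ℝ, ENNReal.ofReal (1 / (1 + s ^ 2)) * h s := by
  rw [Measure.volume_eq_prod, lintegral_prod_symm' _ (by fun_prop)]
  have hinner : ∀ᵐ q : ℝ, ∫⁻ p : ℝ, F (p ^ 2 + q ^ 2) * h (p / q) =
      ∫⁻ s : ℝ, ENNReal.ofReal |q| * (F (q ^ 2 * (1 + s ^ 2)) * h s) := by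
    filter_upwards [Measure.ae_ne volume (0 : ℝ)] with q hq
    rw [lintegral_eq_mul_comp_mul_left _ q hq, ← lintegral_const_mul _ (by fun_prop)]
    refine lintegral_congr fun s => ?_
    rw [mul_div_cancel_left₀ _ hq]
    congr 3
    ring
  rw [lintegral_congr_ae hinner, lintegral_lintegral_swap (by fun_prop),
    ← lintegral_const_mul _ (by fun_prop)]
  refine lintegral_congr fun s => ?_
  have hs : 0 < 1 + s ^ 2 := by positivity
  have hr : 0 < √(1 + s ^ 2) := Real.sqrt_pos.2 hs
  rw [lintegral_eq_mul_comp_mul_left (fun w => ENNReal.ofReal |w| * F (w ^ 2)) (√(1 + s ^ 2)) hr.ne',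
    ← lintegral_const_mul _ (by fun_prop), ← lintegral_mul_const _ (by fun_prop)]
  refine lintegral_congr fun q => ?_
  have e1 : (√(1 + s ^ 2) * q) ^ 2 = q ^ 2 * (1 + s ^ 2) := by
    rw [mul_pow, Real.sq_sqrt hs.le]; ring
  have e2 : ENNReal.ofReal |q| = ENNReal.ofReal |√(1 + s ^ 2)| *
      ENNReal.ofReal |√(1 + s ^ 2) * q| * ENNReal.ofReal (1 / (1 + s ^ 2)) := by
    rw [← ENNReal.ofReal_mul (by positivity), ← ENNReal.ofReal_mul (by positivity)]
    congr 1
    rw [abs_mul, abs_of_pos hr, ← mul_assoc, Real.mul_self_sqrt hs.le]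
    field_simp
  rw [e1, e2]
  ring

/-- If `s` is Cauchy distributed then `log |s|` has a hyperbolic secant law. `Real.log` is even, so
`Real.log s` is `log |s|`, and each half-line contributes half of the right-hand side. -/
lemma lintegral_cauchy_comp_log (f : ℝ → ENNReal) (hf : Measurable f) :
    ∫⁻ s : ℝ, ENNReal.ofReal (1 / (1 + s ^ 2)) * f (Real.log s) =
      ∫⁻ t : ℝ, ENNReal.ofReal (1 / Real.cosh t) * f t := by
  have hpos : ∫⁻ s in Set.Ioi (0 : ℝ), ENNReal.ofReal (1 / (1 + s ^ 2)) * f (Real.log s) =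
      ∫⁻ t : ℝ, ENNReal.ofReal (1 / (2 * Real.cosh t)) * f t := by
    rw [← Real.range_exp, ← Set.image_univ,
      lintegral_image_eq_lintegral_abs_deriv_mul MeasurableSet.univ
        (fun t _ => (Real.hasDerivAt_exp t).hasDerivWithinAt) Real.exp_injective.injOn,
      setLIntegral_univ]
    refine lintegral_congr fun t => ?_
    rw [Real.log_exp, ← mul_assoc, ← ENNReal.ofReal_mul (abs_nonneg _), Real.abs_exp,
      Real.cosh_eq, Real.exp_neg]
    congr 2
    have := Real.exp_pos t
    field_simp
    ring
  have hneg : ∫⁻ s in Set.Iio (0 : ℝ), ENNReal.ofReal (1 / (1 + s ^ 2)) * f (Real.log s) =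
      ∫⁻ s in Set.Ioi (0 : ℝ), ENNReal.ofReal (1 / (1 + s ^ 2)) * f (Real.log s) := by
    have := (Measure.measurePreserving_neg (volume : Measure ℝ)).setLIntegral_comp_preimage
      (measurableSet_Iio (a := (0 : ℝ)))
      (f := fun s => ENNReal.ofReal (1 / (1 + s ^ 2)) * f (Real.log s)) (by fun_prop)
    rw [← this]
    simp
  rw [← lintegral_add_compl _ (measurableSet_Iio (a := (0 : ℝ))), hneg, Set.compl_Iio,
    ← setLIntegral_congr (Ioi_ae_eq_Ici (a := (0 : ℝ))), hpos, ← lintegral_add_left (by fun_prop)]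
  refine lintegral_congr fun t => ?_
  have := Real.cosh_pos t
  rw [← add_mul, ← ENNReal.ofReal_add (by positivity) (by positivity)]
  congr 2
  field_simp
  norm_num

lemma lintegral_cauchy : ∫⁻ s : ℝ, ENNReal.ofReal (1 / (1 + s ^ 2)) = ENNReal.ofReal π := by
  simp only [one_div]
  rw [← ofReal_integral_eq_lintegral_ofReal integrable_inv_one_add_sq
    (ae_of_all _ fun s => by positivity), integral_univ_inv_one_add_sq]

lemma lintegral_eq_det_mul_comp_mulVec (M : Matrix (Fin 2) (Fin 2) ℝ) (hM : M.det ≠ 0)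
    (G : (Fin 2 → ℝ) → ENNReal) (hG : Measurable G) :
    ∫⁻ x, G x = ENNReal.ofReal |M.det| * ∫⁻ p : ℝ × ℝ, G (M *ᵥ ![p.1, p.2]) := by
  have h1 : ∫⁻ p : ℝ × ℝ, G (M *ᵥ ![p.1, p.2]) = ∫⁻ y : Fin 2 → ℝ, G (M *ᵥ y) := by
    rw [(volume_preserving_finTwoArrow ℝ).lintegral_map_equiv]
    refine lintegral_congr fun y => ?_
    congr 2
    ext i
    fin_cases i <;> rfl
  have hmeas : Measurable (Matrix.toLin' M) :=
    (LinearMap.continuous_of_finiteDimensional _).measurable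
  have h2 : ∫⁻ y : Fin 2 → ℝ, G (M *ᵥ y) = ENNReal.ofReal |M.det⁻¹| * ∫⁻ x, G x := by
    rw [← smul_eq_mul, ← lintegral_smul_measure, ← Real.map_matrix_volume_pi_eq_smul_volume_pi hM,
      lintegral_map hG hmeas]
    simp
  rw [h1, h2, ← mul_assoc, ← ENNReal.ofReal_mul (abs_nonneg _), ← abs_mul, mul_inv_cancel₀ hM]
  simp

/-- The quadratic form of `Σ⁻¹` is diagonal in the coordinates `x₁ + x₂` and `x₁ - x₂`. -/
lemma quadForm_eq {σ ρ : ℝ} (hσ : 0 < σ) (hρ : ρ ∈ Set.Ioo (-1 : ℝ) 1) (x : Fin 2 → ℝ) :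
    x ⬝ᵥ ((σ ^ 2 • !![1, ρ; ρ, 1])⁻¹ *ᵥ x) =
      (x 0 + x 1) ^ 2 / (2 * σ ^ 2 * (1 + ρ)) + (x 0 - x 1) ^ 2 / (2 * σ ^ 2 * (1 - ρ)) := by
  obtain ⟨h1, h2⟩ := hρ
  have h1' : 1 + ρ ≠ 0 := by linarith
  have h2' : 1 - ρ ≠ 0 := by linarith
  have h3 : 1 - ρ * ρ ≠ 0 := by
    rw [show 1 - ρ * ρ = (1 + ρ) * (1 - ρ) by ring]
    exact mul_ne_zero h1' h2'
  have h3' : 1 - ρ ^ 2 ≠ 0 := by rwa [pow_two]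
  have hinv : (σ ^ 2 • !![1, ρ; ρ, 1])⁻¹ =
      (σ ^ 2 * (1 - ρ * ρ))⁻¹ • !![1, -ρ; -ρ, 1] := by
    apply Matrix.inv_eq_right_inv
    ext i j
    fin_cases i <;> fin_cases j <;>
      simp [Matrix.mul_apply, Fin.sum_univ_two] <;> field_simp [h3'] <;> ring
  rw [hinv, show 1 - ρ * ρ = (1 + ρ) * (1 - ρ) by ring]
  simp [dotProduct, Matrix.mulVec, Fin.sum_univ_two]
  field_simp
  ring

/-- For `σ > 0`, `ρ ∈ (-1,1)`, `Σ = σ²·[[1,ρ],[ρ,1]]`, and a Borel probability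
measure `μ` on `ℝ²` with density `x ↦ g (xᵀ Σ⁻¹ x)` w.r.t. Lebesgue measure, the pushforward
of `μ` under `x ↦ atanh (2x₁x₂/(x₁²+x₂²)) = ½ log((x₁+x₂)²/(x₁-x₂)²)` has density
`t ↦ (1/π)·sech(t - atanh ρ)` w.r.t. Lebesgue measure on `ℝ`. -/
theorem stmt1 (σ ρ : ℝ) (hσ : 0 < σ) (hρ : ρ ∈ Set.Ioo (-1 : ℝ) 1)
    (g : ℝ → ℝ) (hg : Measurable g) (hg0 : ∀ t, 0 ≤ g t)
    (μ : Measure (Fin 2 → ℝ)) [IsProbabilityMeasure μ]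
    (hμ : μ = volume.withDensity (fun x => ENNReal.ofReal
      (g (x ⬝ᵥ ((σ ^ 2 • !![1, ρ; ρ, 1])⁻¹ *ᵥ x))))) :
    μ.map (fun x => (1 / 2) * Real.log ((x 0 + x 1) ^ 2 / (x 0 - x 1) ^ 2))
      = volume.withDensity (fun t => ENNReal.ofReal
          ((1 / π) * (1 / Real.cosh (t - (1 / 2) * Real.log ((1 + ρ) / (1 - ρ)))))) := by
  set m : ℝ := (1 / 2) * Real.log ((1 + ρ) / (1 - ρ)) with hm
  have hp : 0 < 1 + ρ := by linarith [hρ.1]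
  have hq : 0 < 1 - ρ := by linarith [hρ.2]
  -- `a` and `b` are chosen so that `x = (a p + b q, a p - b q)` turns the form into `p² + q²`.
  set a : ℝ := √(σ ^ 2 * (1 + ρ) / 2) with ha
  set b : ℝ := √(σ ^ 2 * (1 - ρ) / 2) with hb
  have ha2 : a ^ 2 = σ ^ 2 * (1 + ρ) / 2 := Real.sq_sqrt (by positivity)
  have hb2 : b ^ 2 = σ ^ 2 * (1 - ρ) / 2 := Real.sq_sqrt (by positivity)
  have ha0 : 0 < a := Real.sqrt_pos.2 (by positivity)
  have hb0 : 0 < b := Real.sqrt_pos.2 (by positivity)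
  have hab : Real.log (a / b) = m := by
    rw [hm, show (1 + ρ) / (1 - ρ) = (a / b) ^ 2 by rw [div_pow, ha2, hb2]; field_simp,
      Real.log_pow]
    push_cast
    ring
  set M : Matrix (Fin 2) (Fin 2) ℝ := !![a, b; a, -b] with hM
  have hdet : M.det ≠ 0 := by
    rw [hM, Matrix.det_fin_two_of]
    have : 0 < a * b := by positivity
    linarith
  have hplus : ∀ p q : ℝ, (M *ᵥ ![p, q]) 0 + (M *ᵥ ![p, q]) 1 = 2 * a * p := by
    intro p q
    simp [hM, Matrix.mulVec, dotProduct, Fin.sum_univ_two]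
    ring
  have hminus : ∀ p q : ℝ, (M *ᵥ ![p, q]) 0 - (M *ᵥ ![p, q]) 1 = 2 * b * q := by
    intro p q
    simp [hM, Matrix.mulVec, dotProduct, Fin.sum_univ_two]
    ring
  set K : ENNReal := ENNReal.ofReal |M.det| *
    ∫⁻ w : ℝ, ENNReal.ofReal |w| * ENNReal.ofReal (g (w ^ 2)) with hK
  have key : ∀ f : ℝ → ENNReal, Measurable f →
      ∫⁻ x, f ((1 / 2) * Real.log ((x 0 + x 1) ^ 2 / (x 0 - x 1) ^ 2)) ∂μ =
        K * ∫⁻ t : ℝ, ENNReal.ofReal (1 / Real.cosh t) * f (t + m) := by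
    intro f hf
    simp only [quadForm_eq hσ hρ] at hμ
    rw [hμ, lintegral_withDensity_eq_lintegral_mul _ (by fun_prop) (by fun_prop),
      lintegral_eq_det_mul_comp_mulVec M hdet _ (by fun_prop)]
    simp only [Pi.mul_apply, hplus, hminus]
    have hrw : ∀ p : ℝ × ℝ,
        ENNReal.ofReal (g ((2 * a * p.1) ^ 2 / (2 * σ ^ 2 * (1 + ρ)) +
          (2 * b * p.2) ^ 2 / (2 * σ ^ 2 * (1 - ρ)))) *
          f (1 / 2 * Real.log ((2 * a * p.1) ^ 2 / (2 * b * p.2) ^ 2)) =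
        ENNReal.ofReal (g (p.1 ^ 2 + p.2 ^ 2)) * f (Real.log (a / b * (p.1 / p.2))) := by
      intro p
      congr 3
      · congr 2
        · rw [mul_pow, mul_pow, ha2]; field_simp
        · rw [mul_pow, mul_pow, hb2]; field_simp
      -- `½ log z² = log z` for every real `z`, since `Real.log` is even and `Real.log 0 = 0`.
      · rw [← div_pow, Real.log_pow, mul_assoc 2 a, mul_assoc 2 b,
          mul_div_mul_left _ _ two_ne_zero, mul_div_mul_comm]
        push_cast
        ring
    rw [lintegral_congr hrw,
      lintegral_radial_mul_ratio (fun w => ENNReal.ofReal (g w)) (fun s => f (Real.log (a / b * s)))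
        (by fun_prop) (by fun_prop), ← mul_assoc, ← hK,
      ← lintegral_cauchy_comp_log (fun t => f (t + m)) (by fun_prop)]
    congr 1
    refine lintegral_congr_ae ?_
    filter_upwards [Measure.ae_ne volume (0 : ℝ)] with s hs
    rw [Real.log_mul (div_pos ha0 hb0).ne' hs, hab, add_comm m]
  -- The constant is determined by the total mass: taking `f = 1` gives `1 = K π`.
  have hKval : K = ENNReal.ofReal (1 / π) := by
    have h1 := key (fun _ => 1) measurable_const
    rw [← lintegral_cauchy_comp_log (fun _ => 1) measurable_const] at h1
    simp only [mul_one, lintegral_cauchy, lintegral_const, measure_univ] at h1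
    rw [one_div, ENNReal.ofReal_inv_of_pos Real.pi_pos]
    exact ENNReal.eq_inv_of_mul_eq_one_left h1.symm
  refine Measure.ext_of_lintegral _ fun f hf => ?_
  rw [lintegral_map hf (by fun_prop), key f hf, hKval,
    lintegral_withDensity_eq_lintegral_mul _ (by fun_prop) hf,
    ← lintegral_add_right_eq_self (_ * f) m, ← lintegral_const_mul _ (by fun_prop)]
  refine lintegral_congr fun t => ?_
  simp only [Pi.mul_apply, add_sub_cancel_right]
  rw [ENNReal.ofReal_mul (by positivity), mul_assoc]
end

section
/- Let Σ = [[σ₁², σ₁₂],[σ₁₂, σ₂²]] be symmetric positive definite and let μ be a Borel probability measure on ℝ² having density x ↦ g(xᵀΣ⁻¹x) with respect to Lebesgue measure for some nonnegative measurable g. Set ξ = 2σ₁₂/(σ₁² + σ₂²). Then the function x ↦ φ_r(x) = ½ log((x₁+x₂)²/(x₁−x₂)²) is μ-integrable and ∫ φ_r dμ = atanh ξ = ½ log((1+ξ)/(1−ξ)). -/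
open MeasureTheory Matrix Real

/-!
In coordinates `x = L y`, with `L` the lower triangular Cholesky factor of `Σ`, the density becomes a
function of `|y|²`, so in polar coordinates `y = r (cos θ, sin θ)` the law `μ` is the image of a
product of a radial measure `ρ` and Lebesgue measure on `(-π, π)` (`map_ellipticPolar`). The linear
forms `x₁ ± x₂` become `r R cos (θ - α)` and `r S cos (θ - β)` with `R² = σ₁² + 2σ₁₂ + σ₂²` and
`S² = σ₁² - 2σ₁₂ + σ₂²`. The factor `r` cancels in the quotient, whence almost everywhere
`φ_r = log R - log S + log |cos (θ - α)| - log |cos (θ - β)|`, a function of `θ` alone.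
It is integrable because `log |cos|` is, and since `cos` is `2π`-periodic the last two terms have
equal integrals (`integral_log_cos_sub`). Hence the integral equals `log R - log S`.
The cancellation of `r` precedes any integration, since `log |x₁ ± x₂|` alone need not be
integrable under `μ`.
-/

/-- Polar coordinates `(r, θ)` followed by the lower triangular linear map with matrix
`[[a, 0], [b, c]]`. -/
noncomputable def ellipticPolar (a b c : ℝ) (p : ℝ × ℝ) : Fin 2 → ℝ :=
  ![a * (p.1 * cos p.2), b * (p.1 * cos p.2) + c * (p.1 * sin p.2)]

lemma measurable_ellipticPolar (a b c : ℝ) : Measurable (ellipticPolar a b c) := by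
  unfold ellipticPolar
  refine measurable_pi_iff.2 fun i => ?_
  fin_cases i
  · simp only [Fin.zero_eta, Matrix.cons_val_zero]
    fun_prop
  · simp only [Fin.mk_one, Matrix.cons_val_one, Matrix.cons_val_zero]
    fun_prop

lemma lintegral_ellipticPolar {a b c : ℝ} (ha : 0 < a) (hc : 0 < c)
    {F : (Fin 2 → ℝ) → ENNReal} (hF : Measurable F) :
    ∫⁻ x, F x = ∫⁻ p in Set.Ioi (0 : ℝ) ×ˢ Set.Ioo (-π) π,
      ENNReal.ofReal (a * c * p.1) * F (ellipticPolar a b c p) := by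
  have hac : 0 < a * c := mul_pos ha hc
  have hdet : (!![a, 0; b, c] : Matrix (Fin 2) (Fin 2) ℝ).det = a * c := by
    simp [Matrix.det_fin_two]
  have hmap := Real.map_matrix_volume_pi_eq_smul_volume_pi
    (M := (!![a, 0; b, c] : Matrix (Fin 2) (Fin 2) ℝ)) (by rw [hdet]; exact hac.ne')
  rw [hdet, abs_of_pos (inv_pos.2 hac)] at hmap
  have hL : Measurable (toLin' (!![a, 0; b, c] : Matrix (Fin 2) (Fin 2) ℝ)) :=
    (LinearMap.continuous_of_finiteDimensional _).measurable
  have h1 : ∫⁻ y, F (toLin' (!![a, 0; b, c] : Matrix (Fin 2) (Fin 2) ℝ) y)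
      = ENNReal.ofReal (a * c)⁻¹ * ∫⁻ x, F x := by
    rw [← lintegral_map hF hL, hmap, lintegral_smul_measure, smul_eq_mul]
  have h2 : ∫⁻ y, F (toLin' (!![a, 0; b, c] : Matrix (Fin 2) (Fin 2) ℝ) y)
      = ∫⁻ q : ℝ × ℝ, F ![a * q.1, b * q.1 + c * q.2] := by
    rw [← (volume_preserving_finTwoArrow ℝ).lintegral_comp_emb
      (MeasurableEquiv.measurableEmbedding _)]
    refine lintegral_congr fun y => congrArg F ?_
    ext i
    fin_cases i <;>
      simp [MeasurableEquiv.finTwoArrow, Matrix.mulVec, dotProduct, Fin.sum_univ_two]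
  have h3 : ∫⁻ x, F x = ENNReal.ofReal (a * c) *
      ∫⁻ q : ℝ × ℝ, F ![a * q.1, b * q.1 + c * q.2] := by
    rw [← h2, h1, ← mul_assoc, ← ENNReal.ofReal_mul hac.le, mul_inv_cancel₀ hac.ne',
      ENNReal.ofReal_one, one_mul]
  rw [h3, ← lintegral_comp_polarCoord_symm, ← lintegral_const_mul' _ _ ENNReal.ofReal_ne_top,
    polarCoord_target]
  refine lintegral_congr fun p => ?_
  rw [ENNReal.ofReal_mul hac.le, mul_assoc, smul_eq_mul]
  rfl

/-- A law whose density is a function of the squared elliptic-polar radius `r²` splits, in polar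
coordinates, as the product of a radial measure and Lebesgue measure on the angles. -/
lemma map_ellipticPolar {a b c : ℝ} (ha : 0 < a) (hc : 0 < c) {k : ℝ → ENNReal}
    (hk : Measurable k) {q : (Fin 2 → ℝ) → ℝ} (hq : Measurable q)
    (hqp : ∀ p, q (ellipticPolar a b c p) = p.1 ^ 2) :
    (volume : Measure (Fin 2 → ℝ)).withDensity (fun x => k (q x)) =
      Measure.map (ellipticPolar a b c)
        (((volume.restrict (Set.Ioi (0 : ℝ))).withDensity
          (fun r => ENNReal.ofReal (a * c * r) * k (r ^ 2))).prod
          (volume.restrict (Set.Ioo (-π) π))) := by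
  have hΦ := measurable_ellipticPolar a b c
  have hw : Measurable fun r : ℝ => ENNReal.ofReal (a * c * r) * k (r ^ 2) := by fun_prop
  have hkq : Measurable fun x => k (q x) := hk.comp hq
  refine Measure.ext fun s hs => ?_
  rw [Measure.map_apply hΦ hs, prod_withDensity_left hw, withDensity_apply _ hs,
    withDensity_apply _ (hΦ hs), Measure.prod_restrict, ← Measure.volume_eq_prod,
    ← lintegral_indicator hs, ← lintegral_indicator (hΦ hs),
    lintegral_ellipticPolar (b := b) ha hc (hkq.indicator hs)]
  refine lintegral_congr fun p => ?_
  by_cases hp : ellipticPolar a b c p ∈ s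
  · rw [Set.indicator_of_mem hp, Set.indicator_of_mem (by exact hp)]
    simp [hqp]
  · rw [Set.indicator_of_notMem hp, Set.indicator_of_notMem (by exact hp), mul_zero]

lemma exists_polar_form (u v : ℝ) :
    ∃ α, ∀ θ, u * cos θ + v * sin θ = √(u ^ 2 + v ^ 2) * cos (θ - α) := by
  refine ⟨(⟨u, v⟩ : ℂ).arg, fun θ => ?_⟩
  have h1 := Complex.norm_mul_cos_arg (⟨u, v⟩ : ℂ)
  have h2 := Complex.norm_mul_sin_arg (⟨u, v⟩ : ℂ)
  have h3 : ‖(⟨u, v⟩ : ℂ)‖ = √(u ^ 2 + v ^ 2) := by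
    rw [Complex.norm_def, Complex.normSq_mk]
    ring_nf
  rw [h3] at h1 h2
  simp only at h1 h2
  rw [cos_sub]
  linear_combination -cos θ * h1 - sin θ * h2

lemma integrableOn_log_cos_sub (α : ℝ) :
    IntegrableOn (fun θ => log (cos (θ - α))) (Set.Ioo (-π) π) := by
  have h := (intervalIntegrable_log_cos (a := -π - α) (b := π - α)).comp_sub_right α
  simp only [sub_add_cancel] at h
  exact (intervalIntegrable_iff_integrableOn_Ioo_of_le (by linarith [pi_pos])).1 h

lemma integral_log_cos_sub (α : ℝ) :
    ∫ θ in Set.Ioo (-π) π, log (cos (θ - α)) = ∫ θ in Set.Ioo (-π) π, log (cos θ) := by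
  have hle : -π ≤ π := by linarith [pi_pos]
  have hper : Function.Periodic (fun θ => log (cos θ)) (2 * π) := fun θ => by
    simp only [cos_add_two_pi]
  have h := hper.intervalIntegral_add_eq (-π - α) (-π)
  rw [show -π - α + 2 * π = π - α by ring, show -π + 2 * π = π by ring] at h
  rw [← integral_Ioc_eq_integral_Ioo, ← integral_Ioc_eq_integral_Ioo,
    ← intervalIntegral.integral_of_le hle, ← intervalIntegral.integral_of_le hle,
    intervalIntegral.integral_comp_sub_right (fun θ => log (cos θ)), h]

lemma ae_cos_sub_ne_zero (α : ℝ) : ∀ᵐ θ : ℝ, cos (θ - α) ≠ 0 := by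
  have hsub : {θ : ℝ | ¬ cos (θ - α) ≠ 0} ⊆
      Set.range fun k : ℤ => (2 * k + 1) * π / 2 + α := by
    intro θ hθ
    obtain ⟨k, hk⟩ := cos_eq_zero_iff.1 (not_not.1 hθ)
    exact ⟨k, by simp only; linarith⟩
  exact ((Set.countable_range _).mono hsub).measure_zero _

/-- For a symmetric positive definite `Σ = [[σ₁², σ₁₂],[σ₁₂, σ₂²]]` and a Borel
probability measure `μ` on `ℝ²` with density `x ↦ g (xᵀ Σ⁻¹ x)` w.r.t. Lebesgue measure,
with `ξ = 2σ₁₂/(σ₁²+σ₂²)`, the similarity measure `φ_r(x) = ½ log((x₁+x₂)²/(x₁-x₂)²)`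
is `μ`-integrable with `∫ φ_r dμ = atanh ξ = ½ log((1+ξ)/(1-ξ))`. -/
theorem stmt3 (σ₁ σ₂ σ₁₂ : ℝ) (hσ₁ : 0 < σ₁) (hσ₂ : 0 < σ₂)
    (hpd : (!![σ₁ ^ 2, σ₁₂; σ₁₂, σ₂ ^ 2]).PosDef)
    (g : ℝ → ℝ) (hg : Measurable g) (hg0 : ∀ t, 0 ≤ g t)
    (μ : Measure (Fin 2 → ℝ)) [IsProbabilityMeasure μ]
    (hμ : μ = volume.withDensity (fun x => ENNReal.ofReal
      (g (x ⬝ᵥ ((!![σ₁ ^ 2, σ₁₂; σ₁₂, σ₂ ^ 2])⁻¹ *ᵥ x))))) :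
    Integrable (fun x : Fin 2 → ℝ =>
        (1 / 2) * Real.log ((x 0 + x 1) ^ 2 / (x 0 - x 1) ^ 2)) μ ∧
    ∫ x : Fin 2 → ℝ, (1 / 2) * Real.log ((x 0 + x 1) ^ 2 / (x 0 - x 1) ^ 2) ∂μ
      = (1 / 2) * Real.log ((1 + 2 * σ₁₂ / (σ₁ ^ 2 + σ₂ ^ 2))
          / (1 - 2 * σ₁₂ / (σ₁ ^ 2 + σ₂ ^ 2))) := by
  -- the Cholesky factor `[[σ₁, 0], [b, c]]` of `Σ`
  have hD : 0 < σ₁ ^ 2 * σ₂ ^ 2 - σ₁₂ * σ₁₂ := by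
    simpa [Matrix.det_fin_two] using hpd.det_pos
  obtain ⟨b, hb⟩ : ∃ b, b = σ₁₂ / σ₁ := ⟨_, rfl⟩
  obtain ⟨c, hcdef⟩ : ∃ c, c = √(σ₁ ^ 2 * σ₂ ^ 2 - σ₁₂ * σ₁₂) / σ₁ := ⟨_, rfl⟩
  have hc : 0 < c := hcdef ▸ div_pos (sqrt_pos.2 hD) hσ₁
  have h12 : σ₁₂ = σ₁ * b := by rw [hb]; field_simp
  have h22 : σ₂ ^ 2 = b ^ 2 + c ^ 2 := by
    rw [hb, hcdef, div_pow, div_pow, sq_sqrt hD.le]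
    field_simp
    ring
  have hdet : (!![σ₁ ^ 2, σ₁₂; σ₁₂, σ₂ ^ 2]).det = (σ₁ * c) ^ 2 := by
    rw [Matrix.det_fin_two_of, h22, h12]
    ring
  have hq : Measurable fun x : Fin 2 → ℝ =>
      x ⬝ᵥ ((!![σ₁ ^ 2, σ₁₂; σ₁₂, σ₂ ^ 2])⁻¹ *ᵥ x) := by
    simp only [dotProduct, Matrix.mulVec, Fin.sum_univ_two]
    fun_prop
  have hqp : ∀ p, ellipticPolar σ₁ b c p ⬝ᵥ
      ((!![σ₁ ^ 2, σ₁₂; σ₁₂, σ₂ ^ 2])⁻¹ *ᵥ ellipticPolar σ₁ b c p) = p.1 ^ 2 := by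
    intro p
    rw [Matrix.inv_def, hdet, Ring.inverse_eq_inv', Matrix.adjugate_fin_two_of, h22, h12]
    simp only [ellipticPolar, dotProduct, Matrix.mulVec, Fin.sum_univ_two, Matrix.smul_apply,
      smul_eq_mul, Matrix.of_apply, Matrix.cons_val_zero, Matrix.cons_val_one]
    have hc0 := hc.ne'
    field_simp
    linear_combination p.1 ^ 2 * c ^ 2 * sin_sq_add_cos_sq p.2
  have hprod := map_ellipticPolar (b := b) hσ₁ hc (k := fun t => ENNReal.ofReal (g t))
    (by fun_prop) hq hqp
  rw [← hμ] at hprod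
  set ρ := (volume.restrict (Set.Ioi (0 : ℝ))).withDensity
    (fun r => ENNReal.ofReal (σ₁ * c * r) * ENNReal.ofReal (g (r ^ 2))) with hρ
  have hΦ := measurable_ellipticPolar σ₁ b c
  -- total mass one: `ρ` is finite, of mass `1 / (2π)`
  have hmass : ρ Set.univ * ENNReal.ofReal (2 * π) = 1 := by
    have h : μ Set.univ = 1 := measure_univ
    rw [hprod, Measure.map_apply hΦ MeasurableSet.univ, Set.preimage_univ,
      Measure.prod_apply MeasurableSet.univ] at h
    simp only [Set.preimage_univ, Measure.restrict_apply_univ, volume_Ioo, lintegral_const] at h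
    rw [mul_comm, ← h]
    congr 2
    ring
  have h2π : ENNReal.ofReal (2 * π) ≠ 0 := by
    rw [Ne, ENNReal.ofReal_eq_zero, not_le]
    positivity
  have : IsFiniteMeasure ρ := ⟨by
    rw [lt_top_iff_ne_top]
    intro h
    rw [h, ENNReal.top_mul h2π] at hmass
    exact ENNReal.top_ne_one hmass⟩
  have hmass' : ρ.real Set.univ * (2 * π) = 1 := by
    have h := congrArg ENNReal.toReal hmass
    rwa [ENNReal.toReal_mul, ENNReal.toReal_ofReal (by positivity), ENNReal.toReal_one] at h
  obtain ⟨α, hα⟩ := exists_polar_form (σ₁ + b) c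
  obtain ⟨β, hβ⟩ := exists_polar_form (σ₁ - b) (-c)
  have hR : 0 < (σ₁ + b) ^ 2 + c ^ 2 := by positivity
  have hS : 0 < (σ₁ - b) ^ 2 + (-c) ^ 2 := by
    have := sq_pos_of_pos hc
    nlinarith [sq_nonneg (σ₁ - b)]
  set R := √((σ₁ + b) ^ 2 + c ^ 2) with hRdef
  set S := √((σ₁ - b) ^ 2 + (-c) ^ 2) with hSdef
  have hR0 : 0 < R := sqrt_pos.2 hR
  have hS0 : 0 < S := sqrt_pos.2 hS
  let h : ℝ → ℝ := fun θ => (log R - log S) + (log (cos (θ - α)) - log (cos (θ - β)))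
  have hdiff : IntegrableOn (fun θ => log (cos (θ - α)) - log (cos (θ - β))) (Set.Ioo (-π) π) :=
    (integrableOn_log_cos_sub α).sub (integrableOn_log_cos_sub β)
  have hconst : IntegrableOn (fun _ : ℝ => log R - log S) (Set.Ioo (-π) π) :=
    integrable_const _
  have hint : IntegrableOn h (Set.Ioo (-π) π) := hconst.add hdiff
  have hval : ∫ θ in Set.Ioo (-π) π, h θ = 2 * π * (log R - log S) := by
    rw [integral_add hconst hdiff, integral_sub (integrableOn_log_cos_sub α)
      (integrableOn_log_cos_sub β), integral_log_cos_sub, integral_log_cos_sub, sub_self, add_zero,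
      setIntegral_const, volume_real_Ioo_of_le (by linarith [pi_pos]), smul_eq_mul]
    ring
  have hmeas : Measurable fun x : Fin 2 → ℝ =>
      (1 / 2) * Real.log ((x 0 + x 1) ^ 2 / (x 0 - x 1) ^ 2) := by fun_prop
  have hae : (fun p : ℝ × ℝ => h p.2) =ᵐ[ρ.prod (volume.restrict (Set.Ioo (-π) π))]
      fun p => (1 / 2) * Real.log ((ellipticPolar σ₁ b c p 0 + ellipticPolar σ₁ b c p 1) ^ 2 /
        (ellipticPolar σ₁ b c p 0 - ellipticPolar σ₁ b c p 1) ^ 2) := by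
    have hr : ∀ᵐ r ∂ρ, r ∈ Set.Ioi (0 : ℝ) :=
      (withDensity_absolutelyContinuous _ _).ae_le (ae_restrict_mem measurableSet_Ioi)
    filter_upwards [Measure.quasiMeasurePreserving_fst.ae hr,
      Measure.quasiMeasurePreserving_snd.ae (ae_restrict_of_ae (ae_cos_sub_ne_zero α)),
      Measure.quasiMeasurePreserving_snd.ae (ae_restrict_of_ae (ae_cos_sub_ne_zero β))]
      with p hp hpα hpβ
    have hp0 : p.1 ≠ 0 := (Set.mem_Ioi.1 hp).ne'
    have e1 : ellipticPolar σ₁ b c p 0 + ellipticPolar σ₁ b c p 1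
        = p.1 * (R * cos (p.2 - α)) := by
      rw [← hα]
      simp only [ellipticPolar, Matrix.cons_val_zero, Matrix.cons_val_one]
      ring
    have e2 : ellipticPolar σ₁ b c p 0 - ellipticPolar σ₁ b c p 1
        = p.1 * (S * cos (p.2 - β)) := by
      rw [← hβ]
      simp only [ellipticPolar, Matrix.cons_val_zero, Matrix.cons_val_one]
      ring
    rw [e1, e2, ← div_pow, mul_div_mul_left _ _ hp0, log_pow,
      log_div (mul_ne_zero hR0.ne' hpα) (mul_ne_zero hS0.ne' hpβ), log_mul hR0.ne' hpα,
      log_mul hS0.ne' hpβ]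
    simp only [h]
    push_cast
    ring
  have hfin : log R - log S = (1 / 2) * Real.log ((1 + 2 * σ₁₂ / (σ₁ ^ 2 + σ₂ ^ 2))
          / (1 - 2 * σ₁₂ / (σ₁ ^ 2 + σ₂ ^ 2))) := by
    have hT : 0 < σ₁ ^ 2 + σ₂ ^ 2 := by positivity
    have e : (1 + 2 * σ₁₂ / (σ₁ ^ 2 + σ₂ ^ 2)) / (1 - 2 * σ₁₂ / (σ₁ ^ 2 + σ₂ ^ 2))
        = ((σ₁ + b) ^ 2 + c ^ 2) / ((σ₁ - b) ^ 2 + (-c) ^ 2) := by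
      have e1 : (σ₁ + b) ^ 2 + c ^ 2 = (σ₁ ^ 2 + σ₂ ^ 2) * (1 + 2 * σ₁₂ / (σ₁ ^ 2 + σ₂ ^ 2)) := by
        rw [mul_add, mul_div_cancel₀ _ hT.ne', h22, h12]
        ring
      have e2 : (σ₁ - b) ^ 2 + (-c) ^ 2
          = (σ₁ ^ 2 + σ₂ ^ 2) * (1 - 2 * σ₁₂ / (σ₁ ^ 2 + σ₂ ^ 2)) := by
        rw [mul_sub, mul_div_cancel₀ _ hT.ne', h22, h12]
        ring
      rw [e1, e2, mul_div_mul_left _ _ hT.ne']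
    rw [e, log_div hR.ne' hS.ne', hRdef, hSdef, log_sqrt hR.le, log_sqrt hS.le]
    ring
  have hintΦ := (Integrable.comp_snd (f := h) hint ρ).congr hae
  refine ⟨?_, ?_⟩
  · rw [hprod, integrable_map_measure hmeas.aestronglyMeasurable hΦ.aemeasurable]
    exact hintΦ
  · rw [hprod, integral_map hΦ.aemeasurable hmeas.aestronglyMeasurable, ← integral_congr_ae hae,
      integral_fun_snd, hval, ← hfin, smul_eq_mul, ← mul_assoc, hmass', one_mul]
end

section
/- Let Σ = [[σ₁², σ₁₂],[σ₁₂, σ₂²]] be symmetric positive definite, ρ = σ₁₂/(σ₁σ₂), and let μ be a Borel probability measure on ℝ² having density x ↦ g(xᵀΣ⁻¹x) with respect to Lebesgue measure for some nonnegative measurable g. Let c₊ = √(σ₁² + σ₂² + 2σ₁₂) and c₋ = √(σ₁² + σ₂² − 2σ₁₂), and let φ₁, φ₂ ∈ ℝ satisfy cos φ₁ = (σ₁ + σ₁₂/σ₁)/c₊, sin φ₁ = σ₂√(1−ρ²)/c₊, cos φ₂ = (σ₁ − σ₁₂/σ₁)/c₋, sin φ₂ = −σ₂√(1−ρ²)/c₋.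 Then φ_r is square μ-integrable and its variance under μ equals π²/6 − Σ_{k=1}^∞ cos(2k(φ₂ − φ₁))/k². -/
open MeasureTheory Matrix Real

/-!
Writing `x = M y` with `M` the Cholesky factor of `Σ`, the law of `y` is rotation invariant. Since
`φ_r` is homogeneous of degree `0`, passing to polar coordinates shows that `φ_r` under `μ` has the
same distribution as `θ ↦ φ_r (M (cos θ, sin θ))` under the uniform law on `(-π, π)`
(`identDistrib_angle`). The angles `φ₁, φ₂` are chosen so that the latter function is, almost
everywhere, `log (c₊ / c₋) + log |cos (θ - φ₁)| - log |cos (θ - φ₂)|`.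

Its mean is `log (c₊ / c₋)` because translating the `π`-periodic function `log |sin|` does not
change its integral over a period. Its variance is the mean square of a difference of two
translates of `log |sin|`, evaluated by Parseval's identity (`integral_sq_log_sin_sub`): the
`m`-th Fourier coefficient of `log |sin|` on a period `π` has modulus `1 / (2 |m|)`, and the
translations contribute the factor `|e^{2ima} - e^{2imb}|² = 2 - 2 cos (2m(a - b))`.

Throughout, `Real.log t` equals `log |t|`, so `log (sin x)` stands for `log |sin x|`.
-/

/-! ### Square integrability of `log |sin|` -/

lemma log_sin_periodic : Function.Periodic (fun x : ℝ => log (sin x)) π := by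
  intro x; simp [sin_add_pi]

/-- Near `0`, `(log (sin x))²` is bounded by a multiple of `x ^ (-1/2)`, because
`|log t| * t ^ (1/4) < 4` on `(0, 1]` and `sin x ≥ (2 / π) x` on `[0, π / 2]`. -/
lemma intervalIntegrable_sq_log_sin_half :
    IntervalIntegrable (fun x : ℝ => log (sin x) ^ 2) volume 0 (π / 2) := by
  have hpi := pi_pos
  have hr : IntervalIntegrable (fun x : ℝ => 16 * (2 / π) ^ (-(1 / 2) : ℝ) * x ^ (-(1 / 2) : ℝ))
      volume 0 (π / 2) :=
    (intervalIntegral.intervalIntegrable_rpow' (by norm_num)).const_mul _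
  refine hr.mono_fun
    ((measurable_log.comp measurable_sin).pow_const 2).aestronglyMeasurable ?_
  rw [Filter.EventuallyLE, ae_restrict_iff' measurableSet_uIoc]
  refine Filter.Eventually.of_forall fun x hx => ?_
  rw [Set.uIoc_of_le (by positivity)] at hx
  have hx0 : 0 < x := hx.1
  have hsin : 2 / π * x ≤ sin x := mul_le_sin hx0.le hx.2
  have hs0 : 0 < 2 / π * x := by positivity
  have hs : 0 < sin x := hs0.trans_le hsin
  have h1 := abs_log_mul_self_rpow_lt (sin x) (1 / 4) hs (sin_le_one x) (by norm_num)
  have h2 : (log (sin x) * sin x ^ (1 / 4 : ℝ)) ^ 2 ≤ 16 := by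
    rw [← sq_abs]
    have := abs_nonneg (log (sin x) * sin x ^ (1 / 4 : ℝ))
    have h4 : (1 : ℝ) / (1 / 4) = 4 := by norm_num
    rw [h4] at h1
    nlinarith
  have h3 : (sin x ^ (1 / 4 : ℝ)) ^ 2 = sin x ^ (1 / 2 : ℝ) := by
    rw [← rpow_natCast, ← rpow_mul hs.le]; norm_num
  have hp : 0 < sin x ^ (1 / 2 : ℝ) := rpow_pos_of_pos hs _
  have h4 : log (sin x) ^ 2 ≤ 16 * sin x ^ (-(1 / 2) : ℝ) := by
    rw [rpow_neg hs.le, ← div_eq_mul_inv, le_div_iff₀ hp, ← h3, ← mul_pow]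
    exact h2
  have h5 : sin x ^ (-(1 / 2) : ℝ) ≤ (2 / π * x) ^ (-(1 / 2) : ℝ) :=
    rpow_le_rpow_of_nonpos hs0 hsin (by norm_num)
  rw [mul_rpow (by positivity) hx0.le] at h5
  rw [norm_of_nonneg (by positivity), norm_of_nonneg (by positivity)]
  linarith

lemma intervalIntegrable_sq_log_sin (a b : ℝ) :
    IntervalIntegrable (fun x : ℝ => log (sin x) ^ 2) volume a b := by
  have h1 := intervalIntegrable_sq_log_sin_half
  have h2 : IntervalIntegrable (fun x : ℝ => log (sin x) ^ 2) volume (π / 2) π := by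
    have := (h1.comp_sub_left π).symm
    simp only [sin_pi_sub, sub_zero] at this
    convert this using 1; ring
  have hper : Function.Periodic (fun x : ℝ => log (sin x) ^ 2) π := by
    intro x; simp [sin_add_pi]
  refine hper.intervalIntegrable (t := 0) pi_ne_zero ?_ a b
  rw [zero_add]; exact h1.trans h2

/-! ### Fourier coefficients of `log |sin|` -/

lemma intervalIntegrable_ofReal {f : ℝ → ℝ} {a b : ℝ} (h : IntervalIntegrable f volume a b) :
    IntervalIntegrable (fun x => (f x : ℂ)) volume a b :=
  ⟨h.1.ofReal, h.2.ofReal⟩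

/-- An antiderivative of `sin (2(n+1)x) cot x`, whose total increment over `[0, π]` is `π`.
It is built by recursion from `(sin (2(n+2)x) - sin (2(n+1)x)) cot x = cos (2(n+2)x) + cos (2(n+1)x)`.
-/
lemma exists_antideriv (n : ℕ) : ∃ G : ℝ → ℝ, Continuous G ∧ G π - G 0 = π ∧
    ∀ x, sin x ≠ 0 → HasDerivAt G (sin (2 * ((n : ℝ) + 1) * x) * (cos x / sin x)) x := by
  induction n with
  | zero =>
    refine ⟨fun x => x + sin (2 * x) / 2, by fun_prop, by simp, fun x hx => ?_⟩
    have h : HasDerivAt (fun x : ℝ => x + sin (2 * x) / 2) (1 + cos (2 * x) * (2 * 1) / 2) x :=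
      (hasDerivAt_id x).add ((((hasDerivAt_id x).const_mul 2).sin).div_const 2)
    convert h using 1
    simp only [CharP.cast_eq_zero, zero_add, mul_one]
    rw [sin_two_mul, cos_two_mul]; field_simp; ring
  | succ n ih =>
    obtain ⟨G, hG, hG1, hG2⟩ := ih
    refine ⟨fun x => G x + (sin (2 * ((n : ℝ) + 2) * x) / (2 * (n + 2))
      + sin (2 * ((n : ℝ) + 1) * x) / (2 * (n + 1))), by fun_prop, ?_, fun x hx => ?_⟩
    · have e1 : sin (2 * ((n : ℝ) + 2) * π) = 0 := by
        have := sin_nat_mul_pi (2 * (n + 2)); push_cast at this; exact this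
      have e2 : sin (2 * ((n : ℝ) + 1) * π) = 0 := by
        have := sin_nat_mul_pi (2 * (n + 1)); push_cast at this; exact this
      simp [e1, e2, hG1]
    · have h := (hG2 x hx).add
        (((((hasDerivAt_id x).const_mul (2 * ((n : ℝ) + 2))).sin).div_const (2 * (n + 2))).add
        ((((hasDerivAt_id x).const_mul (2 * ((n : ℝ) + 1))).sin).div_const (2 * (n + 1))))
      refine h.congr_deriv ?_
      have hn1 : (n : ℝ) + 1 ≠ 0 := by positivity
      have hn2 : (n : ℝ) + 2 ≠ 0 := by positivity
      simp only [id]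
      push_cast
      set y := (2 * (n : ℝ) + 3) * x with hy
      have a1 : 2 * ((n : ℝ) + 2) * x = y + x := by rw [hy]; ring
      have a2 : 2 * ((n : ℝ) + 1) * x = y - x := by rw [hy]; ring
      have a3 : 2 * ((n : ℝ) + 1 + 1) * x = y + x := by rw [hy]; ring
      rw [a1, a2, a3, sin_add, sin_sub, cos_add, cos_sub]
      field_simp
      ring

/-- Integration by parts, with the boundary term `log (sin x) * sin (2(n+1)x)` vanishing at `0` and
`π`. -/
lemma integral_log_sin_mul_cos (n : ℕ) :
    ∫ x in (0 : ℝ)..π, log (sin x) * cos (2 * ((n : ℝ) + 1) * x) = -(π / (2 * (n + 1))) := by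
  obtain ⟨G, hG, hG1, hG2⟩ := exists_antideriv n
  have hn1 : (n : ℝ) + 1 ≠ 0 := by positivity
  -- `sin (2(n+1)x) = sin x * U (cos x)` absorbs the logarithmic singularities at `0` and `π`
  have hcont : Continuous fun x : ℝ => log (sin x) * sin (2 * ((n : ℝ) + 1) * x) := by
    have : (fun x : ℝ => log (sin x) * sin (2 * ((n : ℝ) + 1) * x)) = fun x : ℝ =>
        (sin x * log (sin x)) * (Polynomial.Chebyshev.U ℝ (2 * n + 1)).eval (cos x) := by
      ext x
      have := Polynomial.Chebyshev.U_real_cos x (2 * n + 1)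
      have e : (((2 * n + 1 : ℤ) : ℝ) + 1) * x = 2 * ((n : ℝ) + 1) * x := by push_cast; ring
      rw [e] at this
      rw [← this]; ring
    rw [this]
    exact (continuous_mul_log.comp continuous_sin).mul
      ((Polynomial.continuous _).comp continuous_cos)
  have key := intervalIntegral.integral_eq_sub_of_hasDerivAt_of_le (a := 0) (b := π)
    (f := fun x => (log (sin x) * sin (2 * ((n : ℝ) + 1) * x) - G x) / (2 * (n + 1)))
    (f' := fun x => log (sin x) * cos (2 * ((n : ℝ) + 1) * x)) pi_pos.le
    ((hcont.sub hG).div_const _).continuousOn ?_ ?_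
  · rw [key]
    have e2 : sin (2 * ((n : ℝ) + 1) * π) = 0 := by
      have := sin_nat_mul_pi (2 * (n + 1)); push_cast at this; exact this
    simp only [sin_pi, sin_zero, log_zero, zero_mul, zero_sub]
    field_simp
    linarith
  · intro x hx
    have hs : sin x ≠ 0 := (sin_pos_of_pos_of_lt_pi hx.1 hx.2).ne'
    have h := ((((hasDerivAt_sin x).log hs).mul
      (((hasDerivAt_id x).const_mul (2 * ((n : ℝ) + 1))).sin)).sub (hG2 x hs)).div_const
        (2 * ((n : ℝ) + 1))
    refine h.congr_deriv ?_
    simp only [id]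
    field_simp
    ring
  · exact (intervalIntegrable_log_sin (a := 0) (b := π)).mul_continuousOn
      (by fun_prop : ContinuousOn (fun x => cos (2 * ((n : ℝ) + 1) * x)) _)

/-- The integrand is odd about `π / 2`. -/
lemma integral_log_sin_mul_sin (m : ℤ) :
    ∫ x in (0 : ℝ)..π, log (sin x) * sin (2 * (m : ℝ) * x) = 0 := by
  have h := intervalIntegral.integral_comp_sub_left (a := 0) (b := π)
    (fun x => log (sin x) * sin (2 * (m : ℝ) * x)) π
  have e : ∀ x : ℝ, sin (2 * (m : ℝ) * (π - x)) = - sin (2 * (m : ℝ) * x) := by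
    intro x
    have := sin_sub_int_mul_two_pi (-(2 * (m : ℝ) * x)) (-m)
    rw [sin_neg] at this
    rw [← this]; push_cast; ring_nf
  simp only [sin_pi_sub, e, sub_self, sub_zero, mul_neg, intervalIntegral.integral_neg] at h
  linarith

lemma norm_integral_exp_mul_log_sin (m : ℤ) (hm : m ≠ 0) :
    ‖∫ x in (0 : ℝ)..π, Complex.exp (-(2 * m * x * Complex.I)) * (log (sin x) : ℂ)‖ ^ 2
      = π ^ 2 / (4 * (m : ℝ) ^ 2) := by
  have hI (u : ℝ → ℝ) (hu : Continuous u) :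
      IntervalIntegrable (fun x => log (sin x) * u x) volume 0 π :=
    (intervalIntegrable_log_sin (a := 0) (b := π)).mul_continuousOn hu.continuousOn
  have hcos : (∫ x in (0 : ℝ)..π, log (sin x) * cos (2 * (m : ℝ) * x)) ^ 2
      = π ^ 2 / (4 * (m : ℝ) ^ 2) := by
    obtain ⟨n, hn⟩ : ∃ n : ℕ, m.natAbs = n + 1 := ⟨m.natAbs - 1, by omega⟩
    have hc : ∀ x : ℝ, cos (2 * (m : ℝ) * x) = cos (2 * ((n : ℝ) + 1) * x) := by
      intro x
      rcases Int.natAbs_eq m with h | h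
      · rw [h, hn]; push_cast; rfl
      · rw [h, hn, ← cos_neg]; push_cast; ring_nf
    have hm2 : (m : ℝ) ^ 2 = ((n : ℝ) + 1) ^ 2 := by
      have : m ^ 2 = ((n : ℤ) + 1) ^ 2 := by
        rw [← Int.natAbs_sq, hn]; push_cast; rfl
      exact_mod_cast this
    simp only [hc, integral_log_sin_mul_cos, hm2]
    field_simp; norm_num
  have hsplit : ∫ x in (0 : ℝ)..π, Complex.exp (-(2 * m * x * Complex.I)) * (log (sin x) : ℂ)
      = ((∫ x in (0 : ℝ)..π, log (sin x) * cos (2 * (m : ℝ) * x) : ℝ) : ℂ) := by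
    have e : ∀ x : ℝ, Complex.exp (-(2 * m * x * Complex.I)) * (log (sin x) : ℂ)
        = ((log (sin x) * cos (2 * (m : ℝ) * x) : ℝ) : ℂ)
          - Complex.I * ((log (sin x) * sin (2 * (m : ℝ) * x) : ℝ) : ℂ) := by
      intro x
      rw [← neg_mul, Complex.exp_mul_I, Complex.cos_neg, Complex.sin_neg]
      push_cast; ring
    simp_rw [e]
    rw [intervalIntegral.integral_sub, intervalIntegral.integral_const_mul,
      intervalIntegral.integral_ofReal, intervalIntegral.integral_ofReal,
      integral_log_sin_mul_sin]
    · simp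
    · exact intervalIntegrable_ofReal (hI (fun x => cos (2 * (m : ℝ) * x)) (by fun_prop))
    · exact (intervalIntegrable_ofReal
        (hI (fun x => sin (2 * (m : ℝ) * x)) (by fun_prop))).const_mul _
  rw [hsplit, Complex.norm_real, norm_eq_abs, sq_abs, hcos]

/-! ### Parseval's identity for a difference of translates -/

lemma memLp_log_sin_add (c : ℝ) {a b : ℝ} (hab : a ≤ b) :
    MemLp (fun x => log (sin (x + c))) 2 (volume.restrict (Set.Ioc a b)) := by
  refine (memLp_two_iff_integrable_sq
    (measurable_log.comp (measurable_sin.comp (measurable_add_const c))).aestronglyMeasurable).2 ?_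
  have := (intervalIntegrable_sq_log_sin (a + c) (b + c)).comp_add_right c
  simp only [add_sub_cancel_right] at this
  exact (intervalIntegrable_iff_integrableOn_Ioc_of_le hab).1 this

/-- Parseval's identity on `[0, π]` for the difference of two translates of `log |sin|`, with the
Basel sum separated off. -/
lemma integral_sq_log_sin_sub (a b : ℝ) :
    ∫ x in (0 : ℝ)..π, (log (sin (x + a)) - log (sin (x + b))) ^ 2
      = π * (π ^ 2 / 6 - ∑' k : ℕ, cos (2 * ((k : ℝ) + 1) * (a - b)) / ((k : ℝ) + 1) ^ 2) := by
  have hpi := pi_pos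
  set h : ℝ → ℝ := fun x => log (sin (x + a)) - log (sin (x + b)) with hh
  have hmem : MemLp (fun x => (h x : ℂ)) 2 (volume.restrict (Set.Ioc 0 π)) :=
    ((memLp_log_sin_add a hpi.le).sub (memLp_log_sin_add b hpi.le)).ofReal
  have hP := hasSum_sq_fourierCoeffOn hpi hmem
  -- translation multiplies the Fourier coefficient by a phase
  have hshift (c : ℝ) (m : ℤ) :
      ∫ x in (0 : ℝ)..π, Complex.exp (-(2 * m * x * Complex.I)) * (log (sin (x + c)) : ℂ)
      = Complex.exp (2 * m * c * Complex.I) *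
        ∫ x in (0 : ℝ)..π, Complex.exp (-(2 * m * x * Complex.I)) * (log (sin x) : ℂ) := by
    have hper : Function.Periodic
        (fun x : ℝ => Complex.exp (-(2 * m * x * Complex.I)) * (log (sin x) : ℂ)) π := by
      intro x
      have e := Complex.exp_int_mul_two_pi_mul_I (-m)
      have e2 : -(2 * (m : ℂ) * ((x + π : ℝ) : ℂ) * Complex.I)
          = -(2 * m * x * Complex.I) + ((-m : ℤ) : ℂ) * (2 * π * Complex.I) := by
        push_cast; ring
      simp only [e2, Complex.exp_add, e, mul_one, sin_add_pi, log_neg_eq_log]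
    have h1 := hper.intervalIntegral_add_eq c 0
    rw [zero_add] at h1
    rw [← h1, ← intervalIntegral.integral_const_mul]
    have h2 := intervalIntegral.integral_comp_add_right (a := 0) (b := π)
      (fun x : ℝ => Complex.exp (2 * m * c * Complex.I) *
        (Complex.exp (-(2 * m * x * Complex.I)) * (log (sin x) : ℂ))) c
    rw [zero_add, add_comm π c] at h2
    rw [← h2]
    refine intervalIntegral.integral_congr fun x _ => ?_
    rw [← mul_assoc, ← Complex.exp_add]
    congr 2
    push_cast; ring
  have hII (c : ℝ) (m : ℤ) : IntervalIntegrable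
      (fun x : ℝ => Complex.exp (-(2 * m * x * Complex.I)) * (log (sin (x + c)) : ℂ))
      volume 0 π := by
    have h0 : IntervalIntegrable (fun x : ℝ => log (sin (x + c))) volume 0 π := by
      have := (intervalIntegrable_log_sin (a := 0 + c) (b := π + c)).comp_add_right c
      simpa using this
    exact (intervalIntegrable_ofReal h0).continuousOn_mul (by fun_prop)
  have hcoef (m : ℤ) : fourierCoeffOn hpi (fun x => (h x : ℂ)) m = (1 / π : ℝ) •
      ((Complex.exp (2 * m * a * Complex.I) - Complex.exp (2 * m * b * Complex.I)) *
        ∫ x in (0 : ℝ)..π, Complex.exp (-(2 * m * x * Complex.I)) * (log (sin x) : ℂ)) := by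
    rw [fourierCoeffOn_eq_integral, sub_zero, sub_mul, ← hshift, ← hshift,
      ← intervalIntegral.integral_sub (hII a m) (hII b m)]
    congr 1
    refine intervalIntegral.integral_congr fun x _ => ?_
    simp only [smul_eq_mul]
    rw [fourier_coe_apply]
    have e : 2 * (π : ℂ) * Complex.I * ((-m : ℤ) : ℂ) * x / ((π : ℝ) : ℂ)
        = -(2 * m * x * Complex.I) := by
      have : (π : ℂ) ≠ 0 := by exact_mod_cast hpi.ne'
      push_cast; field_simp
    rw [e, hh]; push_cast; ring
  have hphase (m : ℤ) :
      ‖Complex.exp (2 * m * a * Complex.I) - Complex.exp (2 * m * b * Complex.I)‖ ^ 2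
        = 2 - 2 * cos (2 * m * (a - b)) := by
    have e1 : (2 * (m : ℂ) * a * Complex.I) = ((2 * m * a : ℝ) : ℂ) * Complex.I := by
      push_cast; ring
    have e2 : (2 * (m : ℂ) * b * Complex.I) = ((2 * m * b : ℝ) : ℂ) * Complex.I := by
      push_cast; ring
    rw [e1, e2, ← Complex.normSq_eq_norm_sq, Complex.normSq_apply, Complex.sub_re, Complex.sub_im,
      Complex.exp_ofReal_mul_I_re, Complex.exp_ofReal_mul_I_re, Complex.exp_ofReal_mul_I_im,
      Complex.exp_ofReal_mul_I_im, mul_sub (2 * (m : ℝ)) a b, cos_sub]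
    nlinarith [sin_sq_add_cos_sq (2 * m * a), sin_sq_add_cos_sq (2 * m * b)]
  have hnorm (m : ℤ) : ‖fourierCoeffOn hpi (fun x => (h x : ℂ)) m‖ ^ 2
      = (1 - cos (2 * m * (a - b))) / (2 * (m : ℝ) ^ 2) := by
    rw [hcoef, norm_smul, norm_mul, mul_pow, mul_pow, hphase]
    rcases eq_or_ne m 0 with rfl | hm
    · simp
    · rw [norm_integral_exp_mul_log_sin m hm, norm_of_nonneg (by positivity)]
      have : (m : ℝ) ≠ 0 := by exact_mod_cast hm
      field_simp; ring
  simp only [hnorm, Complex.norm_real, norm_eq_abs, sq_abs, sub_zero, smul_eq_mul] at hP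
  -- fold the sum over `ℤ` onto the positive integers
  -- (the term at `0` vanishes, being a division by zero)
  have hfold := hP.nat_add_neg
  simp only [Int.cast_zero, mul_zero, zero_mul, cos_zero, sub_self, zero_div, add_zero] at hfold
  have hcosSum := hasSum_zeta_two.sub hfold
  have hterm : (fun n : ℕ => (1 : ℝ) / (n : ℝ) ^ 2
      - ((1 - cos (2 * ((n : ℤ) : ℝ) * (a - b))) / (2 * ((n : ℤ) : ℝ) ^ 2)
        + (1 - cos (2 * ((-(n : ℤ) : ℤ) : ℝ) * (a - b))) / (2 * ((-(n : ℤ) : ℤ) : ℝ) ^ 2)))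
      = fun n : ℕ => cos (2 * (n : ℝ) * (a - b)) / (n : ℝ) ^ 2 := by
    ext n
    push_cast
    have : 2 * -(n : ℝ) * (a - b) = -(2 * n * (a - b)) := by ring
    rw [this, cos_neg, neg_sq]
    rcases eq_or_ne (n : ℝ) 0 with h0 | h0
    · simp [h0]
    · field_simp; ring
  rw [hterm, ← hasSum_nat_add_iff' 1] at hcosSum
  have hval := hcosSum.tsum_eq
  simp only [Finset.sum_range_one, Nat.cast_zero, Nat.cast_add, Nat.cast_one, ne_eq,
    OfNat.ofNat_ne_zero, not_false_eq_true, zero_pow, div_zero, sub_zero] at hval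
  rw [hval]
  field_simp
  ring

/-! ### Reduction to the uniform angle -/

open ProbabilityTheory in
/-- If `M` carries the quadratic form of `S⁻¹` to the standard one, any function that is invariant
under positive dilations has, under the elliptical law with parameter `S`, the distribution of its
restriction to the ellipse `θ ↦ M (cos θ, sin θ)` under the uniform law on `(-π, π)`. -/
lemma identDistrib_angle (M S : Matrix (Fin 2) (Fin 2) ℝ) (hM : M.det ≠ 0)
    (hMS : ∀ y : Fin 2 → ℝ, (M *ᵥ y) ⬝ᵥ (S⁻¹ *ᵥ (M *ᵥ y)) = y 0 ^ 2 + y 1 ^ 2)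
    (g : ℝ → ℝ) (hg : Measurable g) (μ : Measure (Fin 2 → ℝ)) [IsProbabilityMeasure μ]
    (hμ : μ = volume.withDensity (fun x => ENNReal.ofReal (g (x ⬝ᵥ (S⁻¹ *ᵥ x)))))
    (Φ : (Fin 2 → ℝ) → ℝ) (hΦ : Measurable Φ)
    (hhom : ∀ (r : ℝ) (x : Fin 2 → ℝ), 0 < r → Φ (r • x) = Φ x) :
    IdentDistrib Φ (fun θ : ℝ => Φ (M *ᵥ ![cos θ, sin θ])) μ
      ((ENNReal.ofReal (2 * π))⁻¹ • volume.restrict (Set.Ioo (-π) π)) := by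
  have hpi := pi_pos
  have hMm : Measurable fun y : Fin 2 → ℝ => M *ᵥ y := by
    exact (Continuous.matrix_mulVec continuous_const continuous_id).measurable
  have hQm : Measurable fun x : Fin 2 → ℝ => x ⬝ᵥ (S⁻¹ *ᵥ x) := by
    refine Continuous.measurable ?_
    exact continuous_id.dotProduct (Continuous.matrix_mulVec continuous_const continuous_id)
  have hΨ : Measurable fun θ : ℝ => Φ (M *ᵥ ![cos θ, sin θ]) := by
    refine hΦ.comp (hMm.comp ?_)
    refine measurable_pi_iff.2 fun i => ?_
    fin_cases i
    · exact measurable_cos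
    · exact measurable_sin
  set c : ENNReal := ENNReal.ofReal |(M.det)⁻¹| with hc
  have hc0 : c ≠ 0 := by simp [hc, hM]
  have hct : c ≠ ⊤ := ENNReal.ofReal_ne_top
  set A : ENNReal := ∫⁻ r in Set.Ioi (0 : ℝ), ENNReal.ofReal r * ENNReal.ofReal (g (r ^ 2)) with hA
  -- `c` and the radial integral `A` are eliminated afterwards by taking `s = univ`
  have key : ∀ s : Set ℝ, MeasurableSet s → c * μ (Φ ⁻¹' s) =
      A * (volume.restrict (Set.Ioo (-π) π)) ((fun θ : ℝ => Φ (M *ᵥ ![cos θ, sin θ])) ⁻¹' s) := by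
    intro s hs
    set F : (Fin 2 → ℝ) → ENNReal := fun x =>
      s.indicator 1 (Φ x) * ENNReal.ofReal (g (x ⬝ᵥ (S⁻¹ *ᵥ x))) with hF
    have hind : Measurable (s.indicator (1 : ℝ → ENNReal)) := measurable_one.indicator hs
    have hFm : Measurable F := (hind.comp hΦ).mul (hg.comp hQm).ennreal_ofReal
    have h1 : μ (Φ ⁻¹' s) = ∫⁻ x, F x := by
      rw [hμ, withDensity_apply _ (hΦ hs), ← lintegral_indicator (hΦ hs)]
      refine lintegral_congr fun x => ?_
      by_cases hx : Φ x ∈ s <;> simp [hF, hx]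
    have h2 : c * ∫⁻ x, F x = ∫⁻ y : Fin 2 → ℝ, F (M *ᵥ y) := by
      have e := Real.map_matrix_volume_pi_eq_smul_volume_pi hM
      rw [← smul_eq_mul, ← lintegral_smul_measure, ← e]
      rw [lintegral_map hFm (by exact hMm)]
      rfl
    have h3 : ∫⁻ y : Fin 2 → ℝ, F (M *ᵥ y) = ∫⁻ p : ℝ × ℝ, F (M *ᵥ ![p.1, p.2]) := by
      rw [← (volume_preserving_finTwoArrow ℝ).symm.lintegral_comp_emb
        MeasurableEquiv.finTwoArrow.symm.measurableEmbedding]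
      rfl
    have h4 : ∫⁻ p : ℝ × ℝ, F (M *ᵥ ![p.1, p.2]) =
        ∫⁻ p in Set.Ioi (0 : ℝ) ×ˢ Set.Ioo (-π) π,
          (ENNReal.ofReal p.1 * ENNReal.ofReal (g (p.1 ^ 2))) *
            s.indicator 1 (Φ (M *ᵥ ![cos p.2, sin p.2])) := by
      rw [← lintegral_comp_polarCoord_symm, polarCoord_target]
      refine setLIntegral_congr_fun (measurableSet_Ioi.prod measurableSet_Ioo) fun p hp => ?_
      have hr : 0 < p.1 := hp.1
      have hv : ![p.1 * cos p.2, p.1 * sin p.2] = p.1 • ![cos p.2, sin p.2] := by simp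
      simp only [polarCoord_symm_apply, hF, hMS, smul_eq_mul]
      have hq : (![p.1 * cos p.2, p.1 * sin p.2] 0) ^ 2 + (![p.1 * cos p.2, p.1 * sin p.2] 1) ^ 2
          = p.1 ^ 2 := by
        simp only [cons_val_zero, cons_val_one]
        nlinarith [sin_sq_add_cos_sq p.2]
      rw [hq, hv, mulVec_smul, hhom _ _ hr]
      ring
    rw [h1, h2, h3, h4, Measure.volume_eq_prod, ← Measure.prod_restrict,
      lintegral_prod_mul
        (f := fun r : ℝ => ENNReal.ofReal r * ENNReal.ofReal (g (r ^ 2)))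
        (g := fun θ : ℝ => s.indicator 1 (Φ (M *ᵥ ![cos θ, sin θ])))
        (by fun_prop) (hind.comp hΨ).aemeasurable, ← hA]
    congr 1
    rw [← lintegral_indicator_one (hΨ hs)]
    rfl
  have htot := key Set.univ MeasurableSet.univ
  simp only [Set.preimage_univ, measure_univ, mul_one, Measure.restrict_apply_univ,
    Real.volume_Ioo, sub_neg_eq_add, ← two_mul] at htot
  have h2pi0 : ENNReal.ofReal (2 * π) ≠ 0 := by simp [hpi]
  refine ⟨hΦ.aemeasurable, hΨ.aemeasurable, ?_⟩
  ext s hs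
  rw [Measure.map_apply hΦ hs, Measure.map_apply hΨ hs, Measure.smul_apply, smul_eq_mul]
  refine (ENNReal.mul_right_inj hc0 hct).1 ?_
  rw [key s hs, ← mul_assoc]
  congr 1
  rw [htot, mul_assoc, ENNReal.mul_inv_cancel h2pi0 ENNReal.ofReal_ne_top, mul_one]

lemma two_periods {f : ℝ → ℝ} (hf : Function.Periodic f π)
    (hi : IntervalIntegrable f volume 0 π) :
    ∫ x in Set.Ioo (-π) π, f x = 2 * ∫ x in (0 : ℝ)..π, f x := by
  have hI := hf.intervalIntegrable (t := 0) pi_ne_zero (by rwa [zero_add])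
  rw [← integral_Ioc_eq_integral_Ioo, ← intervalIntegral.integral_of_le (by linarith [pi_pos]),
    ← intervalIntegral.integral_add_adjacent_intervals (hI (-π) 0) (hI 0 π)]
  have := hf.intervalIntegral_add_eq (-π) 0
  simp only [neg_add_cancel, zero_add] at this
  rw [this]; ring

/-- Mean and second moment of a shifted difference of translates of `log |sin|`, under the uniform
law on `(-π, π)`. -/
lemma angular_moments (C a b : ℝ) :
    MemLp (fun θ : ℝ => C + (log (sin (θ + a)) - log (sin (θ + b)))) 2
      ((ENNReal.ofReal (2 * π))⁻¹ • volume.restrict (Set.Ioo (-π) π)) ∧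
    ∫ θ, (C + (log (sin (θ + a)) - log (sin (θ + b))))
      ∂((ENNReal.ofReal (2 * π))⁻¹ • volume.restrict (Set.Ioo (-π) π)) = C ∧
    ∫ θ, (C + (log (sin (θ + a)) - log (sin (θ + b)))) ^ 2
      ∂((ENNReal.ofReal (2 * π))⁻¹ • volume.restrict (Set.Ioo (-π) π))
      = C ^ 2 + (π ^ 2 / 6
        - ∑' k : ℕ, cos (2 * ((k : ℝ) + 1) * (a - b)) / ((k : ℝ) + 1) ^ 2) := by
  have hpi := pi_pos
  have hle : (0 : ℝ) ≤ π := hpi.le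
  set h : ℝ → ℝ := fun θ => log (sin (θ + a)) - log (sin (θ + b)) with hh
  have hper : Function.Periodic h π := by
    intro x
    have e (c : ℝ) : x + π + c = x + c + π := by ring
    simp only [hh, e, sin_add_pi, log_neg_eq_log]
  have hmem (u v : ℝ) (huv : u ≤ v) : MemLp h 2 (volume.restrict (Set.Ioc u v)) :=
    (memLp_log_sin_add a huv).sub (memLp_log_sin_add b huv)
  have hi1 : IntervalIntegrable h volume 0 π :=
    (intervalIntegrable_iff_integrableOn_Ioc_of_le hle).2 ((hmem 0 π hle).integrable one_le_two)
  have hi2 : IntervalIntegrable (fun x => h x ^ 2) volume 0 π :=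
    (intervalIntegrable_iff_integrableOn_Ioc_of_le hle).2 (hmem 0 π hle).integrable_sq
  have hlog (c : ℝ) : IntervalIntegrable (fun x => log (sin (x + c))) volume 0 π :=
    (intervalIntegrable_iff_integrableOn_Ioc_of_le hle).2
      ((memLp_log_sin_add c hle).integrable one_le_two)
  have hshift (c : ℝ) : ∫ x in (0 : ℝ)..π, log (sin (x + c)) = ∫ x in (0 : ℝ)..π, log (sin x) := by
    rw [intervalIntegral.integral_comp_add_right (fun x => log (sin x)), zero_add, add_comm π c,
      log_sin_periodic.intervalIntegral_add_eq c 0, zero_add]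
  have hint0 : ∫ x in (0 : ℝ)..π, h x = 0 := by
    rw [hh, intervalIntegral.integral_sub (hlog a) (hlog b), hshift, hshift, sub_self]
  have hC : IntervalIntegrable (fun _ : ℝ => C) volume 0 π := intervalIntegrable_const
  have hweight : ((ENNReal.ofReal (2 * π))⁻¹).toReal = (2 * π)⁻¹ := by
    rw [ENNReal.toReal_inv, ENNReal.toReal_ofReal (by positivity)]
  refine ⟨?_, ?_, ?_⟩
  · refine MemLp.smul_measure ?_ (by simp [hpi])
    refine MemLp.add (memLp_const C) ?_
    exact (hmem (-π) π (by linarith)).mono_measure (Measure.restrict_mono Set.Ioo_subset_Ioc_self le_rfl)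
  · rw [integral_smul_measure, hweight, two_periods (f := fun θ => C + h θ)
      (fun x => by simp only [hper x]) (hC.add hi1),
      intervalIntegral.integral_add hC hi1, hint0]
    simp
    field_simp
  · have hexp : (fun θ => (C + h θ) ^ 2) = fun θ => (C ^ 2 + 2 * C * h θ) + h θ ^ 2 := by
      ext θ; ring
    have hC2 : IntervalIntegrable (fun _ : ℝ => C ^ 2) volume 0 π := intervalIntegrable_const
    have hCh : IntervalIntegrable (fun x : ℝ => 2 * C * h x) volume 0 π := hi1.const_mul _
    have hsum : IntervalIntegrable (fun θ => (C + h θ) ^ 2) volume 0 π := by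
      rw [hexp]; exact (hC2.add hCh).add hi2
    rw [integral_smul_measure, hweight, two_periods (f := fun θ => (C + h θ) ^ 2)
      (fun x => by simp only [hper x]) hsum, hexp,
      intervalIntegral.integral_add (hC2.add hCh) hi2, intervalIntegral.integral_add hC2 hCh,
      intervalIntegral.integral_const_mul, hint0, integral_sq_log_sin_sub]
    generalize ∑' k : ℕ, cos (2 * ((k : ℝ) + 1) * (a - b)) / ((k : ℝ) + 1) ^ 2 = T
    simp
    field_simp

lemma ae_sin_add_ne_zero (a : ℝ) : ∀ᵐ θ : ℝ, sin (θ + a) ≠ 0 := by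
  have hc : {θ : ℝ | ¬ sin (θ + a) ≠ 0}.Countable := by
    refine (Set.countable_range fun n : ℤ => (n : ℝ) * π - a).mono fun θ hθ => ?_
    simp only [ne_eq, not_not, Set.mem_ofPred_eq] at hθ
    obtain ⟨n, hn⟩ := sin_eq_zero_iff.1 hθ
    exact ⟨n, by simp only [hn]; ring⟩
  exact hc.measure_zero volume

/-- For a symmetric positive definite `Σ = [[σ₁², σ₁₂],[σ₁₂, σ₂²]]`,
`ρ = σ₁₂/(σ₁σ₂)`, and a Borel probability measure `μ` on `ℝ²` with density
`x ↦ g (xᵀ Σ⁻¹ x)` w.r.t. Lebesgue measure, with angles `φ₁, φ₂` as specified, the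
similarity measure `φ_r` is square `μ`-integrable and its variance under `μ` equals
`π²/6 - Σ_{k≥1} cos(2k(φ₂-φ₁))/k²`. -/
theorem stmt4 (σ₁ σ₂ σ₁₂ : ℝ) (hσ₁ : 0 < σ₁) (hσ₂ : 0 < σ₂)
    (hpd : (!![σ₁ ^ 2, σ₁₂; σ₁₂, σ₂ ^ 2]).PosDef)
    (g : ℝ → ℝ) (hg : Measurable g) (hg0 : ∀ t, 0 ≤ g t)
    (μ : Measure (Fin 2 → ℝ)) [IsProbabilityMeasure μ]
    (hμ : μ = volume.withDensity (fun x => ENNReal.ofReal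
      (g (x ⬝ᵥ ((!![σ₁ ^ 2, σ₁₂; σ₁₂, σ₂ ^ 2])⁻¹ *ᵥ x)))))
    (φ₁ φ₂ : ℝ)
    (hc₁ : Real.cos φ₁ = (σ₁ + σ₁₂ / σ₁) / Real.sqrt (σ₁ ^ 2 + σ₂ ^ 2 + 2 * σ₁₂))
    (hs₁ : Real.sin φ₁ = σ₂ * Real.sqrt (1 - (σ₁₂ / (σ₁ * σ₂)) ^ 2)
        / Real.sqrt (σ₁ ^ 2 + σ₂ ^ 2 + 2 * σ₁₂))
    (hc₂ : Real.cos φ₂ = (σ₁ - σ₁₂ / σ₁) / Real.sqrt (σ₁ ^ 2 + σ₂ ^ 2 - 2 * σ₁₂))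
    (hs₂ : Real.sin φ₂ = -(σ₂ * Real.sqrt (1 - (σ₁₂ / (σ₁ * σ₂)) ^ 2))
        / Real.sqrt (σ₁ ^ 2 + σ₂ ^ 2 - 2 * σ₁₂)) :
    Integrable (fun x : Fin 2 → ℝ =>
        ((1 / 2) * Real.log ((x 0 + x 1) ^ 2 / (x 0 - x 1) ^ 2)) ^ 2) μ ∧
    Integrable (fun x : Fin 2 → ℝ =>
        (1 / 2) * Real.log ((x 0 + x 1) ^ 2 / (x 0 - x 1) ^ 2)) μ ∧
    (∫ x : Fin 2 → ℝ, ((1 / 2) * Real.log ((x 0 + x 1) ^ 2 / (x 0 - x 1) ^ 2)) ^ 2 ∂μ)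
      - (∫ x : Fin 2 → ℝ, (1 / 2) * Real.log ((x 0 + x 1) ^ 2 / (x 0 - x 1) ^ 2) ∂μ) ^ 2
      = π ^ 2 / 6 - ∑' k : ℕ, Real.cos (2 * ((k : ℝ) + 1) * (φ₂ - φ₁)) / ((k : ℝ) + 1) ^ 2 := by
  have hdet : 0 < σ₁ ^ 2 * σ₂ ^ 2 - σ₁₂ ^ 2 := by
    have := hpd.det_pos
    rw [det_fin_two_of] at this
    nlinarith
  have habs : |σ₁₂| < σ₁ * σ₂ := abs_lt_of_sq_lt_sq (by nlinarith) (by positivity)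
  obtain ⟨habs1, habs2⟩ := abs_lt.1 habs
  have hp : 0 < σ₁ ^ 2 + σ₂ ^ 2 + 2 * σ₁₂ := by nlinarith [sq_nonneg (σ₁ - σ₂)]
  have hm : 0 < σ₁ ^ 2 + σ₂ ^ 2 - 2 * σ₁₂ := by nlinarith [sq_nonneg (σ₁ - σ₂)]
  set cp := √(σ₁ ^ 2 + σ₂ ^ 2 + 2 * σ₁₂)
  set cm := √(σ₁ ^ 2 + σ₂ ^ 2 - 2 * σ₁₂)
  have hcp : 0 < cp := sqrt_pos.2 hp
  have hcm : 0 < cm := sqrt_pos.2 hm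
  set s := σ₂ * √(1 - (σ₁₂ / (σ₁ * σ₂)) ^ 2) with hs
  have hρ : 1 - (σ₁₂ / (σ₁ * σ₂)) ^ 2 = (σ₁ ^ 2 * σ₂ ^ 2 - σ₁₂ ^ 2) / (σ₁ * σ₂) ^ 2 := by
    field_simp
  have hρ0 : 0 < 1 - (σ₁₂ / (σ₁ * σ₂)) ^ 2 := by rw [hρ]; positivity
  have hs0 : 0 < s := mul_pos hσ₂ (sqrt_pos.2 hρ0)
  have hss : σ₁ ^ 2 * s ^ 2 = σ₁ ^ 2 * σ₂ ^ 2 - σ₁₂ ^ 2 := by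
    rw [hs, mul_pow, sq_sqrt hρ0.le, hρ]; field_simp
  set Φ : (Fin 2 → ℝ) → ℝ := fun x => (1 / 2) * log ((x 0 + x 1) ^ 2 / (x 0 - x 1) ^ 2) with hΦdef
  have hΦ : Measurable Φ := by
    refine (measurable_log.comp ?_).const_mul _
    fun_prop
  -- the Cholesky factor of the covariance parameter
  set M : Matrix (Fin 2) (Fin 2) ℝ := !![σ₁, 0; σ₁₂ / σ₁, s] with hMdef
  have hM : M.det ≠ 0 := by
    rw [hMdef, det_fin_two_of]; simp; exact ⟨hσ₁.ne', hs0.ne'⟩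
  have hID := identDistrib_angle M !![σ₁ ^ 2, σ₁₂; σ₁₂, σ₂ ^ 2] hM (fun y => by
      rw [inv_def, det_fin_two_of, adjugate_fin_two_of, Ring.inverse_eq_inv']
      simp only [hMdef, mulVec, dotProduct, Fin.sum_univ_two, Matrix.smul_apply, of_apply, cons_val',
        cons_val_zero, cons_val_one, smul_eq_mul, cons_val_fin_one]
      have hd : σ₁ ^ 2 * σ₂ ^ 2 - σ₁₂ * σ₁₂ ≠ 0 := by nlinarith
      have hd' : σ₁ ^ 2 * σ₂ ^ 2 - σ₁₂ * σ₁₂ = σ₁ ^ 2 * s ^ 2 := by rw [hss]; ring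
      have hσ₂s : σ₂ ^ 2 = s ^ 2 + σ₁₂ ^ 2 / σ₁ ^ 2 := by
        field_simp; linarith
      rw [hd', hσ₂s]
      field_simp
      ring) g hg μ hμ Φ hΦ (fun r x hr => by
      simp only [hΦdef, Pi.smul_apply, smul_eq_mul, ← mul_add, ← mul_sub, mul_pow]
      rw [mul_div_mul_left _ _ (by positivity)])
  have hae : (fun θ : ℝ => Φ (M *ᵥ ![cos θ, sin θ])) =ᵐ[
      (ENNReal.ofReal (2 * π))⁻¹ • volume.restrict (Set.Ioo (-π) π)]
      fun θ => log (cp / cm) + (log (sin (θ + (π / 2 - φ₁))) - log (sin (θ + (π / 2 - φ₂)))) := by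
    refine Measure.ae_smul_measure (ae_restrict_of_ae ?_) _
    filter_upwards [ae_sin_add_ne_zero (π / 2 - φ₁), ae_sin_add_ne_zero (π / 2 - φ₂)] with θ h1 h2
    have e1 : (M *ᵥ ![cos θ, sin θ]) 0 + (M *ᵥ ![cos θ, sin θ]) 1
        = cp * sin (θ + (π / 2 - φ₁)) := by
      have : θ + (π / 2 - φ₁) = (θ - φ₁) + π / 2 := by ring
      rw [this, sin_add_pi_div_two, cos_sub, hc₁, hs₁]
      simp only [hMdef, mulVec, dotProduct, Fin.sum_univ_two, of_apply, cons_val',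
        cons_val_zero, cons_val_one, cons_val_fin_one]
      field_simp; ring
    have e2 : (M *ᵥ ![cos θ, sin θ]) 0 - (M *ᵥ ![cos θ, sin θ]) 1
        = cm * sin (θ + (π / 2 - φ₂)) := by
      have : θ + (π / 2 - φ₂) = (θ - φ₂) + π / 2 := by ring
      rw [this, sin_add_pi_div_two, cos_sub, hc₂, hs₂]
      simp only [hMdef, mulVec, dotProduct, Fin.sum_univ_two, of_apply, cons_val',
        cons_val_zero, cons_val_one, cons_val_fin_one]
      field_simp; ring
    simp only [hΦdef]
    rw [e1, e2, ← div_pow, log_pow, log_div (mul_ne_zero hcp.ne' h1) (mul_ne_zero hcm.ne' h2),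
      log_mul hcp.ne' h1, log_mul hcm.ne' h2, log_div hcp.ne' hcm.ne']
    push_cast; ring
  obtain ⟨hL2, hmean, hsq⟩ := angular_moments (log (cp / cm)) (π / 2 - φ₁) (π / 2 - φ₂)
  have hΦL2 : MemLp Φ 2 μ := hID.memLp_iff.2 (hL2.ae_eq hae.symm)
  refine ⟨hΦL2.integrable_sq, hΦL2.integrable one_le_two, ?_⟩
  have hI1 : ∫ x, Φ x ∂μ = log (cp / cm) := by
    rw [hID.integral_eq, integral_congr_ae hae, hmean]
  have hI2 := hID.sq.integral_eq
  have hae2 := hae.fun_comp (fun t : ℝ => t ^ 2)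
  have hI2' : ∫ x, Φ x ^ 2 ∂μ = _ := hI2.trans ((integral_congr_ae hae2).trans hsq)
  rw [hI1, hI2']
  have e : π / 2 - φ₁ - (π / 2 - φ₂) = φ₂ - φ₁ := by ring
  rw [e]; ring
end

section
/- Let n ≥ 2, σ > 0, ρ ∈ (−1/(n−1), 1), and let Σ = σ²·((1−ρ)·Iₙ + ρ·Jₙ), where Iₙ is the n×n identity matrix and Jₙ is the n×n all-ones matrix. Let μ be a Borel probability measure on ℝⁿ having density x ↦ g(xᵀΣ⁻¹x) with respect to Lebesgue measure for some nonnegative measurable g. Let Pₙ = (1/n)Jₙ and Pₙ⊥ = Iₙ − Pₙ, and set φ_ρ = (1/n)·log((1 + (n−1)ρ)/(1 − ρ)). Then the pushforward of μ under the map x ↦ (1/n)·log((xᵀPₙx)/(xᵀPₙ⊥x)) (defined μ-almost everywhere) is absolutely continuous with respect to Lebesgue measure on ℝ with density t ↦ (1/B(1/2, (n−1)/2)) · n·e^{(n/2)(t − φ_ρ)} / (1 + e^{n(t − φ_ρ)})^{n/2}. -/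
/-!
Write `x = α u ιₙ + β w` with `u ∈ ℝ` and `w ⊥ ιₙ` (`splitEquiv`), where `n α² = a` and `β² = b` for
the eigenvalues `a = σ² (1 + (n-1) ρ)` and `b = σ² (1 - ρ)` of `Σ`. In these coordinates
`xᵀ Σ⁻¹ x = u² + ‖w‖²`, while `xᵀ Pₙ x = a u²` and `xᵀ Pₙ⊥ x = b ‖w‖²`, so `φ_r(x)` is `φ_ρ` plus
`(1/n) log (u² / ‖w‖²)`, and Lebesgue measure becomes a multiple of the product measure.

For fixed `w`, substitute `u = ± ‖w‖ e^{nt/2}`; the density turns into `g (‖w‖² (1 + e^{nt}))`, and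
rescaling `w` by `(1 + e^{nt})^{-1/2}` in dimension `n - 1` separates the variables
(`lintegral_ratio_radial`). Hence the law of `t` is `C · n e^{nt/2} / (1 + e^{nt})^{n/2} dt`, with all
dependence on `g` and on the normalization of Haar measure inside the constant `C`. Since the total
mass is one, `C` is the inverse of the Beta integral `lintegral_logistic_beta`.
-/

open MeasureTheory Matrix Real

/-- The `n × n` all-ones matrix `Jₙ`. -/
def onesMatrix (n : ℕ) : Matrix (Fin n) (Fin n) ℝ := Matrix.of fun _ _ => 1

/-! ### Radial densities on a product `ℝ × W` -/

/-- The substitution `u = ± r e^{mt/2}` on the two half-lines. -/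
lemma lintegral_sq_eq (m r : ℝ) (hm : 0 < m) (hr : 0 < r) (f : ℝ → ENNReal) :
    ∫⁻ u : ℝ, f (u ^ 2)
      = ∫⁻ t : ℝ, ENNReal.ofReal (m * r * exp (m / 2 * t)) * f (r ^ 2 * exp (m * t)) := by
  have hsq (t : ℝ) : (r * exp (m / 2 * t)) ^ 2 = r ^ 2 * exp (m * t) := by
    rw [mul_pow, ← Real.exp_nat_mul]; congr 2; push_cast; ring
  have hhalf : ∀ ε : ℝ, |ε| = 1 →
      ∫⁻ u in (fun t => ε * (r * exp (m / 2 * t))) '' Set.univ, f (u ^ 2)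
        = ∫⁻ t : ℝ, ENNReal.ofReal (m / 2 * r * exp (m / 2 * t)) * f (r ^ 2 * exp (m * t)) := by
    intro ε hε
    have hε0 : ε ≠ 0 := by rintro rfl; simp at hε
    have hε2 : ε ^ 2 = 1 := by rw [← sq_abs, hε]; norm_num
    rw [lintegral_image_eq_lintegral_abs_deriv_mul
      (f' := fun t => ε * (r * (exp (m / 2 * t) * (m / 2)))) MeasurableSet.univ]
    · rw [Measure.restrict_univ]
      refine lintegral_congr fun t => ?_
      congr 2
      · rw [abs_mul, hε, one_mul, abs_of_pos (by positivity)]; ring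
      · rw [mul_pow, hε2, one_mul, hsq]
    · intro t _
      have h1 : HasDerivAt (fun t : ℝ => m / 2 * t) (m / 2) t := by
        simpa using (hasDerivAt_id t).const_mul (m / 2)
      exact ((h1.exp.const_mul r).const_mul ε).hasDerivWithinAt
    · intro s _ t _ hst
      have := Real.exp_injective (mul_left_cancel₀ hr.ne' (mul_left_cancel₀ hε0 hst))
      exact mul_left_cancel₀ (by positivity) this
  have himg1 : (fun t => (1 : ℝ) * (r * exp (m / 2 * t))) '' Set.univ = Set.Ioi 0 := by
    ext u
    simp only [Set.image_univ, Set.mem_range, Set.mem_Ioi]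
    constructor
    · rintro ⟨t, rfl⟩; positivity
    · intro hu
      refine ⟨2 / m * log (u / r), ?_⟩
      rw [show m / 2 * (2 / m * log (u / r)) = log (u / r) by field_simp, exp_log (by positivity)]
      field_simp
  have himg2 : (fun t => (-1 : ℝ) * (r * exp (m / 2 * t))) '' Set.univ = Set.Iio 0 := by
    have : (fun t => (-1 : ℝ) * (r * exp (m / 2 * t))) '' Set.univ
        = Neg.neg '' ((fun t => (1 : ℝ) * (r * exp (m / 2 * t))) '' Set.univ) := by
      rw [Set.image_image]; simp
    rw [this, himg1]; simp
  have h1 := hhalf 1 (by simp)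
  have h2 := hhalf (-1) (by simp)
  rw [himg1] at h1
  rw [himg2] at h2
  rw [← lintegral_add_compl _ (measurableSet_Ioi (a := (0:ℝ))), Set.compl_Ioi, h1,
    setLIntegral_congr Iio_ae_eq_Iic.symm, h2, ← two_mul, ← lintegral_const_mul' _ _ (by simp)]
  refine lintegral_congr fun t => ?_
  rw [← mul_assoc]
  congr 1
  rw [show (2 : ENNReal) = ENNReal.ofReal 2 by simp, ← ENNReal.ofReal_mul (by norm_num)]
  congr 1; ring

/-- The substitution `w ↦ √c w`, which multiplies Haar measure on a `d`-dimensional space by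
`c ^ (-d/2)`; the factor `‖w‖` contributes the remaining `c ^ (-1/2)`. -/
lemma lintegral_norm_mul_scale {W : Type*} [NormedAddCommGroup W] [NormedSpace ℝ W]
    [FiniteDimensional ℝ W] [MeasurableSpace W] [BorelSpace W] (ν : Measure W) [ν.IsAddHaarMeasure]
    (G : ℝ → ENNReal) (hG : Measurable G) (c : ℝ) (hc : 0 < c) :
    ∫⁻ w, ENNReal.ofReal ‖w‖ * G (‖w‖ ^ 2 * c) ∂ν
      = ENNReal.ofReal ((c ^ (((Module.finrank ℝ W : ℝ) + 1) / 2))⁻¹)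
        * ∫⁻ w, ENNReal.ofReal ‖w‖ * G (‖w‖ ^ 2) ∂ν := by
  have hs : 0 < √c := Real.sqrt_pos.2 hc
  have hmap := Measure.map_addHaar_smul ν hs.ne'
  have key : ∫⁻ w, ENNReal.ofReal ‖w‖ * G (‖w‖ ^ 2) ∂(ν.map (√c • ·))
      = ENNReal.ofReal (√c) * ∫⁻ w, ENNReal.ofReal ‖w‖ * G (‖w‖ ^ 2 * c) ∂ν := by
    rw [lintegral_map (by fun_prop) (by fun_prop), ← lintegral_const_mul _ (by fun_prop)]
    refine lintegral_congr fun w => ?_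
    rw [norm_smul, Real.norm_of_nonneg hs.le, ENNReal.ofReal_mul hs.le, mul_assoc, mul_pow,
      Real.sq_sqrt hc.le, mul_comm c]
  rw [hmap, lintegral_smul_measure, smul_eq_mul] at key
  have h2 : ENNReal.ofReal (√c)⁻¹ * ENNReal.ofReal (√c) = 1 := by
    rw [← ENNReal.ofReal_mul (by positivity), inv_mul_cancel₀ hs.ne', ENNReal.ofReal_one]
  rw [← one_mul (∫⁻ w, ENNReal.ofReal ‖w‖ * G (‖w‖ ^ 2 * c) ∂ν), ← h2, mul_assoc, ← key, ← mul_assoc,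
    ← ENNReal.ofReal_mul (by positivity)]
  congr 2
  rw [abs_of_pos (by positivity), ← mul_inv, ← pow_succ', Real.sqrt_eq_rpow, ← Real.rpow_natCast,
    ← Real.rpow_mul hc.le]
  congr 2; push_cast; ring

/-- Under a radial density `G (u² + ‖w‖²)` on `ℝ × W`, the variable `(log (u² / ‖w‖²)) / m` has, up to
a constant factor, a density that does not depend on `G`. Substituting `u = ± ‖w‖ e^{mt/2}` for fixed
`w` and exchanging the integrals leaves an integral over `W` whose dependence on `t` is a scaling. -/
lemma lintegral_ratio_radial {W : Type*} [NormedAddCommGroup W] [NormedSpace ℝ W]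
    [FiniteDimensional ℝ W] [MeasurableSpace W] [BorelSpace W] [Nontrivial W]
    (ν : Measure W) [ν.IsAddHaarMeasure]
    (m : ℝ) (hm : m = (Module.finrank ℝ W : ℝ) + 1)
    (K G : ℝ → ENNReal) (hK : Measurable K) (hG : Measurable G) :
    ∫⁻ p : ℝ × W, K (p.1 ^ 2 / ‖p.2‖ ^ 2) * G (p.1 ^ 2 + ‖p.2‖ ^ 2) ∂(volume.prod ν)
      = (∫⁻ w, ENNReal.ofReal ‖w‖ * G (‖w‖ ^ 2) ∂ν)
        * ∫⁻ t : ℝ, K (exp (m * t))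
          * ENNReal.ofReal (m * exp (m / 2 * t) / (1 + exp (m * t)) ^ (m / 2)) := by
  have hm0 : 0 < m := by rw [hm]; positivity
  rw [lintegral_prod_symm _ (by fun_prop)]
  have h1 : ∀ᵐ w ∂ν, ∫⁻ u : ℝ, K (u ^ 2 / ‖w‖ ^ 2) * G (u ^ 2 + ‖w‖ ^ 2)
      = ∫⁻ t : ℝ, (K (exp (m * t)) * ENNReal.ofReal (m * exp (m / 2 * t)))
        * (ENNReal.ofReal ‖w‖ * G (‖w‖ ^ 2 * (1 + exp (m * t)))) := by
    filter_upwards [Measure.ae_ne ν 0] with w hw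
    have hr : 0 < ‖w‖ := norm_pos_iff.2 hw
    rw [lintegral_sq_eq m ‖w‖ hm0 hr (fun s => K (s / ‖w‖ ^ 2) * G (s + ‖w‖ ^ 2))]
    refine lintegral_congr fun t => ?_
    rw [mul_div_cancel_left₀ _ (by positivity),
      show m * ‖w‖ * exp (m / 2 * t) = m * exp (m / 2 * t) * ‖w‖ by ring,
      ENNReal.ofReal_mul (by positivity),
      show ‖w‖ ^ 2 * exp (m * t) + ‖w‖ ^ 2 = ‖w‖ ^ 2 * (1 + exp (m * t)) by ring]
    ring
  rw [lintegral_congr_ae h1, lintegral_lintegral_swap (by fun_prop),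
    ← lintegral_const_mul _ (by fun_prop)]
  refine lintegral_congr fun t => ?_
  rw [lintegral_const_mul _ (by fun_prop), lintegral_norm_mul_scale ν G hG _ (by positivity),
    ← hm, div_eq_mul_inv (m * exp (m / 2 * t)), ENNReal.ofReal_mul (p := m * exp (m / 2 * t)) (by positivity)]
  ring

/-! ### The Beta integral -/

/-- The Beta integral `B(1/2, (m-1)/2)` in the variable `x = e^{mt} / (1 + e^{mt})`. -/
lemma lintegral_logistic_beta (m : ℝ) (hm : 1 < m) :
    ∫⁻ t : ℝ, ENNReal.ofReal (m * exp (m / 2 * t) / (1 + exp (m * t)) ^ (m / 2))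
      = ENNReal.ofReal (Gamma (1 / 2) * Gamma ((m - 1) / 2) / Gamma (m / 2)) := by
  have hα : (0 : ℝ) < 1 / 2 := by norm_num
  have hβ : 0 < (m - 1) / 2 := by linarith
  have hm0 : 0 < m := by linarith
  have hB : ProbabilityTheory.beta (1 / 2) ((m - 1) / 2)
      = Gamma (1 / 2) * Gamma ((m - 1) / 2) / Gamma (m / 2) := by
    rw [ProbabilityTheory.beta]; congr 2; ring
  have hBpos := ProbabilityTheory.beta_pos hα hβ
  have h1 := ProbabilityTheory.lintegral_betaPDF_eq_one hα hβ
  rw [ProbabilityTheory.lintegral_betaPDF] at h1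
  have himg : (fun t => exp (m * t) / (1 + exp (m * t))) '' Set.univ = Set.Ioo 0 1 := by
    ext x
    simp only [Set.image_univ, Set.mem_range, Set.mem_Ioo]
    constructor
    · rintro ⟨t, rfl⟩
      exact ⟨by positivity, (div_lt_one (by positivity)).2 (by linarith)⟩
    · rintro ⟨h0, h1⟩
      have h2 : 0 < 1 - x := by linarith
      refine ⟨log (x / (1 - x)) / m, ?_⟩
      rw [mul_div_cancel₀ _ hm0.ne', exp_log (by positivity)]
      field_simp
      ring
  rw [← himg, lintegral_image_eq_lintegral_abs_deriv_mul
    (f' := fun t => m * exp (m * t) / (1 + exp (m * t)) ^ 2) MeasurableSet.univ] at h1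
  · rw [Measure.restrict_univ] at h1
    rw [← hB, ← mul_one (ENNReal.ofReal (ProbabilityTheory.beta _ _)), ← h1,
      ← lintegral_const_mul' _ _ (by simp)]
    refine lintegral_congr fun t => ?_
    rw [← ENNReal.ofReal_mul (by positivity), ← ENNReal.ofReal_mul hBpos.le]
    congr 1
    rw [abs_of_pos (by positivity)]
    set e := exp (m * t) with he
    have he0 : 0 < e := exp_pos _
    have hD : 0 < 1 + e := by positivity
    have e1 : exp (m / 2 * t) = e ^ (1 / 2 : ℝ) := by
      rw [he, ← Real.exp_mul]; congr 1; ring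
    have e2 : 1 - e / (1 + e) = (1 + e)⁻¹ := by field_simp; ring
    rw [e1, e2, Real.div_rpow he0.le hD.le, Real.inv_rpow hD.le, Real.rpow_sub_one he0.ne',
      Real.rpow_sub_one hD.ne', Real.rpow_sub_one hD.ne',
      show m / 2 = 1 / 2 + (m - 1) / 2 by ring, Real.rpow_add hD]
    have p1 : 0 < (1 + e) ^ (1 / 2 : ℝ) := by positivity
    have p2 : 0 < (1 + e) ^ ((m - 1) / 2 : ℝ) := by positivity
    field_simp
  · intro t _
    have h1 : HasDerivAt (fun t : ℝ => m * t) m t := by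
      simpa using (hasDerivAt_id t).const_mul m
    have h2 := h1.exp.div (h1.exp.const_add 1) (by positivity)
    refine (h2.congr_deriv ?_).hasDerivWithinAt
    ring
  · intro s _ t _ hst
    have hst : exp (m * s) / (1 + exp (m * s)) = exp (m * t) / (1 + exp (m * t)) := hst
    rw [div_eq_div_iff (by positivity) (by positivity)] at hst
    have : exp (m * s) = exp (m * t) := by linarith
    exact mul_left_cancel₀ hm0.ne' (Real.exp_injective this)

/-! ### The splitting of `ℝⁿ` along `ιₙ` -/

/-- The vectors of `ℝⁿ` with coordinate sum zero, i.e. the orthogonal complement of `ιₙ`, with the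
Euclidean norm. -/
def zeroSum (n : ℕ) : Submodule ℝ (EuclideanSpace ℝ (Fin n)) where
  carrier := {w | ∑ i, w i = 0}
  add_mem' := by
    intro a b ha hb
    simp only [Set.mem_ofPred_eq] at *
    simp [Finset.sum_add_distrib, ha, hb]
  zero_mem' := by simp
  smul_mem' := by
    intro c a ha
    simp only [Set.mem_ofPred_eq] at *
    simp [← Finset.mul_sum, ha]

/-- The linear coordinates `(u, w) ↦ α u ιₙ + β w` on `ℝⁿ = ℝ ιₙ ⊕ ιₙᗮ`. -/
noncomputable def splitEquiv (n : ℕ) (hn : n ≠ 0) (α β : ℝ) (hα : α ≠ 0) (hβ : β ≠ 0) :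
    (ℝ × zeroSum n) ≃ₗ[ℝ] (Fin n → ℝ) where
  toFun p := fun i => α * p.1 + β * (p.2 : EuclideanSpace ℝ (Fin n)) i
  map_add' p q := by ext i; simp; ring
  map_smul' c p := by ext i; simp; ring
  invFun x := ((∑ i, x i) / (n * α),
    ⟨WithLp.toLp 2 fun i => (x i - (∑ j, x j) / n) / β, by
      change ∑ i, (x i - (∑ j, x j) / n) / β = 0
      rw [← Finset.sum_div, Finset.sum_sub_distrib]
      simp
      left
      field_simp
      simp⟩)
  left_inv p := by
    have h : ∑ i, (p.2 : EuclideanSpace ℝ (Fin n)) i = 0 := p.2.2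
    have hn' : (n : ℝ) ≠ 0 := by exact_mod_cast hn
    ext i
    · simp [Finset.sum_add_distrib, ← Finset.mul_sum, h]
      field_simp
    · simp [Finset.sum_add_distrib, ← Finset.mul_sum, h]
      field_simp
      ring
  right_inv x := by
    have hn' : (n : ℝ) ≠ 0 := by exact_mod_cast hn
    ext i
    simp
    field_simp
    ring

lemma dot_onesMatrix (n : ℕ) (x : Fin n → ℝ) :
    x ⬝ᵥ (onesMatrix n *ᵥ x) = (∑ i, x i) ^ 2 := by
  simp [onesMatrix, dotProduct, mulVec, ← Finset.sum_mul, sq]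

lemma onesMatrix_mul_self (n : ℕ) : onesMatrix n * onesMatrix n = (n : ℝ) • onesMatrix n := by
  ext i j
  simp [onesMatrix, Matrix.mul_apply]

/-- The equicorrelation matrix has eigenvalue `a` on `ιₙ` and `b` on its orthogonal complement; its
inverse has `a⁻¹` and `b⁻¹`. -/
lemma inv_equicorrelation (n : ℕ) (hn : n ≠ 0) (s ρ a b : ℝ) (ha : a ≠ 0) (hb : b ≠ 0)
    (hae : a = s * (1 + ((n : ℝ) - 1) * ρ)) (hbe : b = s * (1 - ρ)) :
    (s • ((1 - ρ) • (1 : Matrix (Fin n) (Fin n) ℝ) + ρ • onesMatrix n))⁻¹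
      = b⁻¹ • (1 : Matrix (Fin n) (Fin n) ℝ) + ((a⁻¹ - b⁻¹) / n) • onesMatrix n := by
  have hn' : (n : ℝ) ≠ 0 := by exact_mod_cast hn
  apply Matrix.inv_eq_right_inv
  have h1 : s • ((1 - ρ) • (1 : Matrix (Fin n) (Fin n) ℝ) + ρ • onesMatrix n)
      = b • (1 : Matrix (Fin n) (Fin n) ℝ) + ((a - b) / n) • onesMatrix n := by
    rw [smul_add, smul_smul, smul_smul, hbe, hae]
    congr 2
    field_simp
    ring
  rw [h1]
  simp only [add_mul, mul_add, smul_mul_assoc, mul_smul_comm, one_mul, mul_one, smul_smul,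
    onesMatrix_mul_self]
  have hzero : b⁻¹ * ((a - b) / n) + (a⁻¹ - b⁻¹) / n * (b + (a - b) / n * n) = 0 := by
    field_simp
    ring
  calc _ = (b⁻¹ * b) • (1 : Matrix (Fin n) (Fin n) ℝ)
        + (b⁻¹ * ((a - b) / n) + (a⁻¹ - b⁻¹) / n * (b + (a - b) / n * n)) • onesMatrix n := by
        module
    _ = 1 := by rw [hzero, inv_mul_cancel₀ hb, one_smul, zero_smul, add_zero]

section
variable {n : ℕ} (hn : n ≠ 0) {α β : ℝ} (hα : α ≠ 0) (hβ : β ≠ 0) (p : ℝ × zeroSum n)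

lemma sum_splitEquiv : ∑ i, splitEquiv n hn α β hα hβ p i = n * α * p.1 := by
  have h : ∑ i, (p.2 : EuclideanSpace ℝ (Fin n)) i = 0 := p.2.2
  simp [splitEquiv, Finset.sum_add_distrib, ← Finset.mul_sum, h]
  ring

lemma dot_splitEquiv : splitEquiv n hn α β hα hβ p ⬝ᵥ splitEquiv n hn α β hα hβ p
    = n * α ^ 2 * p.1 ^ 2 + β ^ 2 * ‖p.2‖ ^ 2 := by
  have h : ∑ i, (p.2 : EuclideanSpace ℝ (Fin n)) i = 0 := p.2.2
  have hnorm : ‖p.2‖ ^ 2 = ∑ i, ((p.2 : EuclideanSpace ℝ (Fin n)) i) ^ 2 := by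
    rw [Submodule.coe_norm, EuclideanSpace.real_norm_sq_eq]
  have : ∀ i, splitEquiv n hn α β hα hβ p i * splitEquiv n hn α β hα hβ p i
      = α ^ 2 * p.1 ^ 2 + 2 * α * β * p.1 * (p.2 : EuclideanSpace ℝ (Fin n)) i
        + β ^ 2 * ((p.2 : EuclideanSpace ℝ (Fin n)) i) ^ 2 := by
    intro i
    simp only [splitEquiv, LinearEquiv.coe_mk, LinearMap.coe_mk, AddHom.coe_mk]
    ring
  simp only [dotProduct, this]
  rw [Finset.sum_add_distrib, Finset.sum_add_distrib, ← Finset.mul_sum, ← Finset.mul_sum, ← Finset.mul_sum, h,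
    hnorm]
  simp
  ring
end

lemma finrank_zeroSum (n : ℕ) (hn : n ≠ 0) :
    (n : ℝ) = (Module.finrank ℝ (zeroSum n) : ℝ) + 1 := by
  have h := (splitEquiv n hn 1 1 one_ne_zero one_ne_zero).finrank_eq
  simp only [Module.finrank_prod, Module.finrank_self, Module.finrank_fin_fun] at h
  have h' : (1 : ℝ) + Module.finrank ℝ (zeroSum n) = n := by exact_mod_cast h
  linarith

lemma exists_volume_eq_smul_map (n : ℕ) (e : (ℝ × zeroSum n) ≃ₗ[ℝ] (Fin n → ℝ)) :
    ∃ c : ENNReal, (volume : Measure (Fin n → ℝ))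
      = c • (volume.prod (volume : Measure (zeroSum n))).map e := by
  have : ((volume.prod (volume : Measure (zeroSum n))).map e).IsAddHaarMeasure :=
    e.toContinuousLinearEquiv.isAddHaarMeasure_map _
  exact ⟨_, Measure.isAddLeftInvariant_eq_smul _ _⟩

/-! ### The law of the similarity measure -/

/-- For `n ≥ 2`, `σ > 0`, `ρ ∈ (-1/(n-1), 1)`, the equicorrelation covariance
matrix `Σ = σ²((1-ρ)Iₙ + ρJₙ)`, and a Borel probability measure `μ` on `ℝⁿ` with density
`x ↦ g (xᵀ Σ⁻¹ x)` w.r.t. Lebesgue measure, the pushforward of `μ` under the multivariate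
similarity map `x ↦ (1/n)·log((xᵀPₙx)/(xᵀPₙ⊥x))` (with `Pₙ = (1/n)Jₙ`, `Pₙ⊥ = Iₙ - Pₙ`) is
absolutely continuous w.r.t. Lebesgue measure with the Logistic-Beta density
`t ↦ (1/B(1/2,(n-1)/2))·n·e^{(n/2)(t-φ_ρ)}/(1+e^{n(t-φ_ρ)})^{n/2}`, where
`φ_ρ = (1/n)·log((1+(n-1)ρ)/(1-ρ))`. -/
theorem stmt6 (n : ℕ) (hn : 2 ≤ n) (σ ρ : ℝ) (hσ : 0 < σ)
    (hρ : ρ ∈ Set.Ioo (-(1 / ((n : ℝ) - 1))) 1)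
    (g : ℝ → ℝ) (hg : Measurable g) (hg0 : ∀ t, 0 ≤ g t)
    (μ : Measure (Fin n → ℝ)) [IsProbabilityMeasure μ]
    (hμ : μ = volume.withDensity (fun x => ENNReal.ofReal
      (g (x ⬝ᵥ ((σ ^ 2 • ((1 - ρ) • (1 : Matrix (Fin n) (Fin n) ℝ)
            + ρ • onesMatrix n))⁻¹ *ᵥ x))))) :
    μ.map (fun x => (1 / (n : ℝ)) * Real.log
        ((x ⬝ᵥ (((1 / (n : ℝ)) • onesMatrix n) *ᵥ x))
          / (x ⬝ᵥ (((1 : Matrix (Fin n) (Fin n) ℝ) - (1 / (n : ℝ)) • onesMatrix n) *ᵥ x))))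
      = volume.withDensity (fun t => ENNReal.ofReal
          ((Real.Gamma ((n : ℝ) / 2) / (Real.Gamma (1 / 2) * Real.Gamma (((n : ℝ) - 1) / 2)))
            * ((n : ℝ)
              * Real.exp (((n : ℝ) / 2) * (t - (1 / (n : ℝ))
                  * Real.log ((1 + ((n : ℝ) - 1) * ρ) / (1 - ρ))))
              / (1 + Real.exp ((n : ℝ) * (t - (1 / (n : ℝ))
                  * Real.log ((1 + ((n : ℝ) - 1) * ρ) / (1 - ρ))))) ^ ((n : ℝ) / 2)))) := by
  have hn0 : n ≠ 0 := by omega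
  have hn2 : (2 : ℝ) ≤ n := by exact_mod_cast hn
  have hnpos : (0 : ℝ) < n := by linarith
  have hρ1 : 0 < 1 - ρ := by linarith [hρ.2]
  have hρ2 : 0 < 1 + ((n : ℝ) - 1) * ρ := by
    have h := hρ.1
    have h1 : (0 : ℝ) < (n : ℝ) - 1 := by linarith
    have h2 := mul_lt_mul_of_pos_left h h1
    have h3 : ((n : ℝ) - 1) * -(1 / ((n : ℝ) - 1)) = -1 := by field_simp
    linarith
  obtain ⟨a, hae⟩ : ∃ a, a = σ ^ 2 * (1 + ((n : ℝ) - 1) * ρ) := ⟨_, rfl⟩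
  obtain ⟨b, hbe⟩ : ∃ b, b = σ ^ 2 * (1 - ρ) := ⟨_, rfl⟩
  have ha : 0 < a := by rw [hae]; positivity
  have hb : 0 < b := by rw [hbe]; positivity
  have hab : (1 + ((n : ℝ) - 1) * ρ) / (1 - ρ) = a / b := by
    rw [hae, hbe]; field_simp
  rw [hab]
  obtain ⟨φ, hφ⟩ : ∃ φ, φ = 1 / (n : ℝ) * Real.log (a / b) := ⟨_, rfl⟩
  rw [← hφ]
  rw [inv_equicorrelation n hn0 (σ ^ 2) ρ a b ha.ne' hb.ne' hae hbe] at hμ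
  have hα : √(a / n) ≠ 0 := (Real.sqrt_pos.2 (by positivity)).ne'
  have hβ : √b ≠ 0 := (Real.sqrt_pos.2 hb).ne'
  have hα2 : √(a / n) ^ 2 = a / n := Real.sq_sqrt (by positivity)
  have hβ2 : √b ^ 2 = b := Real.sq_sqrt hb.le
  let e := splitEquiv n hn0 _ _ hα hβ
  have hP (p) : (e p) ⬝ᵥ (((1 / (n : ℝ)) • onesMatrix n) *ᵥ (e p)) = a * p.1 ^ 2 := by
    rw [smul_mulVec, dotProduct_smul, dot_onesMatrix, sum_splitEquiv, smul_eq_mul, mul_pow,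
      mul_pow, hα2]
    field_simp
  have hPperp (p) : (e p) ⬝ᵥ (((1 : Matrix (Fin n) (Fin n) ℝ)
      - (1 / (n : ℝ)) • onesMatrix n) *ᵥ (e p)) = b * ‖p.2‖ ^ 2 := by
    rw [sub_mulVec, dotProduct_sub, hP, one_mulVec, dot_splitEquiv, hα2, hβ2]
    field_simp
    ring
  have hQ (p) : (e p) ⬝ᵥ ((b⁻¹ • (1 : Matrix (Fin n) (Fin n) ℝ)
      + ((a⁻¹ - b⁻¹) / n) • onesMatrix n) *ᵥ (e p)) = p.1 ^ 2 + ‖p.2‖ ^ 2 := by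
    rw [add_mulVec, dotProduct_add, smul_mulVec, smul_mulVec, dotProduct_smul, dotProduct_smul,
      dot_onesMatrix, sum_splitEquiv, one_mulVec, dot_splitEquiv, smul_eq_mul, smul_eq_mul,
      mul_pow, mul_pow, hα2, hβ2]
    field_simp
    ring
  have hcont (M : Matrix (Fin n) (Fin n) ℝ) : Measurable fun x : Fin n → ℝ => x ⬝ᵥ (M *ᵥ x) := by
    refine Continuous.measurable ?_
    fun_prop
  have hT : Measurable (fun x : Fin n → ℝ => (1 / (n : ℝ)) * Real.log
        ((x ⬝ᵥ (((1 / (n : ℝ)) • onesMatrix n) *ᵥ x))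
          / (x ⬝ᵥ (((1 : Matrix (Fin n) (Fin n) ℝ) - (1 / (n : ℝ)) • onesMatrix n) *ᵥ x)))) :=
    (Real.measurable_log.comp ((hcont _).div (hcont _))).const_mul _
  have heM : Measurable e :=
    (LinearMap.continuous_of_finiteDimensional (e : (ℝ × zeroSum n) →ₗ[ℝ] (Fin n → ℝ))).measurable
  have hfin := finrank_zeroSum n hn0
  have : Nontrivial (zeroSum n) := by
    apply Module.nontrivial_of_finrank_pos (R := ℝ)
    have : (0 : ℝ) < Module.finrank ℝ (zeroSum n) := by linarith
    exact_mod_cast this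
  obtain ⟨c, hc⟩ := exists_volume_eq_smul_map n e
  let h : ℝ → ℝ := fun t =>
    (n : ℝ) * exp ((n : ℝ) / 2 * t) / (1 + exp ((n : ℝ) * t)) ^ ((n : ℝ) / 2)
  have hh : Measurable h := by fun_prop
  -- The law of `φ_r` up to a multiplicative constant, which may a priori be infinite.
  obtain ⟨C, hC⟩ : ∃ C : ENNReal, ∀ A : Set ℝ, MeasurableSet A →
      μ.map (fun x => (1 / (n : ℝ)) * Real.log
        ((x ⬝ᵥ (((1 / (n : ℝ)) • onesMatrix n) *ᵥ x))
          / (x ⬝ᵥ (((1 : Matrix (Fin n) (Fin n) ℝ) - (1 / (n : ℝ)) • onesMatrix n) *ᵥ x)))) A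
        = C * ∫⁻ t, A.indicator 1 t * ENNReal.ofReal (h (t - φ)) := by
    refine ⟨c * ∫⁻ w : zeroSum n, ENNReal.ofReal ‖w‖ * ENNReal.ofReal (g (‖w‖ ^ 2)),
      fun A hA => ?_⟩
    have hind : Measurable (A.indicator (1 : ℝ → ENNReal)) := measurable_one.indicator hA
    have hD : Measurable fun x : Fin n → ℝ => ENNReal.ofReal
        (g (x ⬝ᵥ ((b⁻¹ • (1 : Matrix (Fin n) (Fin n) ℝ)
          + ((a⁻¹ - b⁻¹) / n) • onesMatrix n) *ᵥ x))) :=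
      (hg.comp (hcont _)).ennreal_ofReal
    rw [← lintegral_indicator_one hA, lintegral_map hind hT, hμ]
    refine (lintegral_withDensity_eq_lintegral_mul _ hD (hind.comp hT)).trans ?_
    rw [hc, lintegral_smul_measure, lintegral_map (hD.mul (hind.comp hT)) heM]
    simp only [Pi.mul_apply, Function.comp_apply, hP, hPperp, hQ]
    have hcore := lintegral_ratio_radial (volume : Measure (zeroSum n)) n hfin
      (fun s => A.indicator 1 (1 / (n : ℝ) * Real.log (a / b * s)))
      (fun s => ENNReal.ofReal (g s)) (hind.comp (by fun_prop)) (by fun_prop)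
    rw [← lintegral_add_right_eq_self _ φ]
    simp only [add_sub_cancel_right]
    have hlog (t : ℝ) : 1 / (n : ℝ) * Real.log (a / b * exp (n * t)) = t + φ := by
      rw [Real.log_mul (by positivity) (by positivity), Real.log_exp, hφ]
      field_simp
      ring
    simp only [hlog] at hcore
    rw [smul_eq_mul, mul_assoc, ← hcore]
    congr 1
    refine lintegral_congr fun p => ?_
    rw [mul_comm, mul_div_mul_comm]
  have hB := lintegral_logistic_beta n (by linarith)
  have hG1 : 0 < Real.Gamma (1 / 2) := Real.Gamma_pos_of_pos (by norm_num)
  have hG2 : 0 < Real.Gamma (((n : ℝ) - 1) / 2) := Real.Gamma_pos_of_pos (by linarith)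
  have hG3 : 0 < Real.Gamma ((n : ℝ) / 2) := Real.Gamma_pos_of_pos (by linarith)
  -- The constant is determined by the total mass being one.
  have hCval : C = ENNReal.ofReal
      (Real.Gamma ((n : ℝ) / 2) / (Real.Gamma (1 / 2) * Real.Gamma (((n : ℝ) - 1) / 2))) := by
    have h1 := hC Set.univ MeasurableSet.univ
    rw [Measure.map_apply hT MeasurableSet.univ, Set.preimage_univ, measure_univ] at h1
    simp only [Set.indicator_univ, Pi.one_apply, one_mul] at h1
    rw [lintegral_sub_right_eq_self (fun t => ENNReal.ofReal (h t)) φ, hB] at h1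
    rw [ENNReal.eq_inv_of_mul_eq_one_left h1.symm, ← ENNReal.ofReal_inv_of_pos (by positivity),
      inv_div]
  ext A hA
  rw [hC A hA, withDensity_apply _ hA, ← lintegral_indicator hA,
    ← lintegral_const_mul _ (by
      have hind : Measurable (A.indicator (1 : ℝ → ENNReal)) := measurable_one.indicator hA
      fun_prop)]
  refine lintegral_congr fun t => ?_
  by_cases ht : t ∈ A
  · rw [Set.indicator_of_mem ht, Set.indicator_of_mem ht, hCval, Pi.one_apply, one_mul,
      ← ENNReal.ofReal_mul (by positivity)]
  · simp [Set.indicator_of_notMem ht]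
end

section
/- Let σ > 0, ρ ∈ (−1,1), Σ = σ²·[[1, ρ],[ρ, 1]], and let μ be a Borel probability measure on ℝ² with density x ↦ g(xᵀΣ⁻¹x) with respect to Lebesgue measure for some nonnegative measurable g. Then μ({x = (x₁,x₂) : x₁·x₂ > 0}) = 1/2 + arcsin(ρ)/π; equivalently, writing P for this probability, ρ = −cos(π·P). -/
/-!
Write `ρ = -cos 2γ` with `γ = (π - arccos ρ) / 2 ∈ (0, π/2)`. The linear substitution
`x = M z`, `M = σ [[sin γ, cos γ], [sin γ, -cos γ]]`, satisfies `M Mᵀ = Σ`, so it turns the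
density into a constant times `g (|z|²)`, and it turns `x₀ x₁ > 0` into the condition
`cos γ < |cos θ|` on the polar angle `θ` of `z`. In polar coordinates a rotation-invariant density
factors into a radial and an angular part, so the `μ`-measure of a set that is a cone in `z` is
a constant `K` times the length of its set of angles in `(-π, π)` (`exists_angular_const`).
The whole plane has angular length `2π`, which gives `K = 1 / (2π)`; the set
`cos γ < |cos θ|` has length `4γ` (`volume_angles`). Hence the probability is
`2γ / π = 1 - arccos ρ / π = 1/2 + arcsin ρ / π`.
-/

open MeasureTheory Matrix Real

/-- A square root of `Σ = σ² [[1, ρ], [ρ, 1]]`, in the sense `M Mᵀ = Σ`, when `ρ = -cos 2γ`. -/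
noncomputable def rootMat (σ γ : ℝ) : Matrix (Fin 2) (Fin 2) ℝ :=
  !![σ * sin γ, σ * cos γ; σ * sin γ, -(σ * cos γ)]

lemma det_rootMat (σ γ : ℝ) : (rootMat σ γ).det = -(σ ^ 2 * sin (2 * γ)) := by
  rw [rootMat, det_fin_two_of, sin_two_mul]
  ring

/-- The substitution `x = M z` turns the quadratic form `xᵀ Σ⁻¹ x` into `|z|²`. -/
lemma quadForm_rootMat {σ ρ γ : ℝ} (hσ : 0 < σ) (hγ : ρ = -cos (2 * γ))
    (hs : sin (2 * γ) ≠ 0) (z : Fin 2 → ℝ) :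
    (rootMat σ γ *ᵥ z) ⬝ᵥ ((σ ^ 2 • !![1, ρ; ρ, 1])⁻¹ *ᵥ (rootMat σ γ *ᵥ z))
      = z 0 ^ 2 + z 1 ^ 2 := by
  have hM : IsUnit (rootMat σ γ).det := by
    rw [det_rootMat, isUnit_iff_ne_zero]
    exact neg_ne_zero.2 (mul_ne_zero (by positivity) hs)
  have hMM : σ ^ 2 • !![1, ρ; ρ, 1] = rootMat σ γ * (rootMat σ γ)ᵀ := by
    have h1 := sin_sq_add_cos_sq γ
    have h2 := cos_two_mul γ
    ext i j
    fin_cases i <;> fin_cases j <;> simp [rootMat, Matrix.mul_apply, Fin.sum_univ_two, hγ] <;>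
      grind
  have hMt : IsUnit (rootMat σ γ)ᵀ.det := by rwa [det_transpose]
  rw [hMM, Matrix.mul_inv_rev, Matrix.mulVec_mulVec, Matrix.mul_assoc,
    Matrix.nonsing_inv_mul _ hM, Matrix.mul_one, dotProduct_comm, dotProduct_mulVec,
    ← mulVec_transpose, Matrix.mulVec_mulVec, Matrix.mul_nonsing_inv _ hMt, Matrix.one_mulVec]
  simp [dotProduct, Fin.sum_univ_two, sq]

/-- Change of variables `x = M z` followed by polar coordinates for `z`. -/
lemma lintegral_rootMat_polar {M : Matrix (Fin 2) (Fin 2) ℝ} (hM : M.det ≠ 0)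
    {f : (Fin 2 → ℝ) → ENNReal} (hf : Measurable f) :
    ∫⁻ x, f x = ENNReal.ofReal |M.det| *
      ∫⁻ p in polarCoord.target,
        ENNReal.ofReal p.1 * f (M *ᵥ ![p.1 * cos p.2, p.1 * sin p.2]) := by
  have hmap := Real.map_matrix_volume_pi_eq_smul_volume_pi hM
  have hmeas : Measurable (toLin' M) := (LinearMap.continuous_on_pi _).measurable
  have hvol : (volume : Measure (Fin 2 → ℝ))
      = ENNReal.ofReal |M.det| • Measure.map (toLin' M) volume := by
    rw [hmap, smul_smul, ← ENNReal.ofReal_mul (abs_nonneg _), ← abs_mul,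
      mul_inv_cancel₀ hM]
    simp
  have hfin : ∫⁻ z : Fin 2 → ℝ, f (M *ᵥ z) = ∫⁻ p : ℝ × ℝ, f (M *ᵥ ![p.1, p.2]) :=
    (MeasurePreserving.lintegral_map_equiv (fun z => f (M *ᵥ z)) MeasurableEquiv.finTwoArrow.symm
      ((volume_preserving_finTwoArrow ℝ).symm _))
  calc ∫⁻ x, f x = ∫⁻ x, f x ∂(ENNReal.ofReal |M.det| • Measure.map (toLin' M) volume) := by
        rw [← hvol]
    _ = ENNReal.ofReal |M.det| * ∫⁻ z, f (M *ᵥ z) := by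
        rw [lintegral_smul_measure, lintegral_map hf hmeas]
        simp
    _ = _ := by
        rw [hfin, ← lintegral_comp_polarCoord_symm]
        simp

/-- The measure of a set which is a cone in the variable `z = M⁻¹ x` is proportional to the length
of its set `T` of polar angles. -/
lemma exists_angular_const {σ ρ γ : ℝ} (hσ : 0 < σ) (hγ : ρ = -cos (2 * γ))
    (hs : sin (2 * γ) ≠ 0) {g : ℝ → ℝ} (hg : Measurable g) :
    ∃ K : ENNReal, ∀ (S : Set (Fin 2 → ℝ)) (T : Set ℝ), MeasurableSet S → MeasurableSet T →
      (∀ r θ : ℝ, 0 < r → (rootMat σ γ *ᵥ ![r * cos θ, r * sin θ] ∈ S ↔ θ ∈ T)) →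
      (volume.withDensity (fun x : Fin 2 → ℝ => ENNReal.ofReal
        (g (x ⬝ᵥ ((σ ^ 2 • !![1, ρ; ρ, 1])⁻¹ *ᵥ x))))) S
        = K * volume (T ∩ Set.Ioo (-π) π) := by
  have hM : (rootMat σ γ).det ≠ 0 := by
    rw [det_rootMat]
    exact neg_ne_zero.2 (mul_ne_zero (by positivity) hs)
  refine ⟨ENNReal.ofReal |(rootMat σ γ).det| *
    ∫⁻ r in Set.Ioi (0 : ℝ), ENNReal.ofReal r * ENNReal.ofReal (g (r ^ 2)), ?_⟩
  intro S T hS hT hST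
  have hd : Measurable (fun x : Fin 2 → ℝ => ENNReal.ofReal
      (g (x ⬝ᵥ ((σ ^ 2 • !![1, ρ; ρ, 1])⁻¹ *ᵥ x)))) := by
    refine ENNReal.measurable_ofReal.comp (hg.comp ?_)
    exact Continuous.measurable (by fun_prop)
  rw [withDensity_apply _ hS, ← lintegral_indicator hS,
    lintegral_rootMat_polar hM (hd.indicator hS), mul_assoc]
  congr 1
  have htgt : MeasurableSet polarCoord.target := polarCoord.open_target.measurableSet
  calc _ = ∫⁻ p in polarCoord.target,
        (ENNReal.ofReal p.1 * ENNReal.ofReal (g (p.1 ^ 2))) * T.indicator 1 p.2 := by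
        refine setLIntegral_congr_fun htgt ?_
        rintro ⟨r, θ⟩ hp
        have hr : 0 < r := hp.1
        have hq : (r * cos θ) ^ 2 + (r * sin θ) ^ 2 = r ^ 2 := by
          linear_combination r ^ 2 * sin_sq_add_cos_sq θ
        by_cases h : θ ∈ T
        · have h' := (hST r θ hr).2 h
          simp only [Set.indicator_of_mem h, Set.indicator_of_mem h',
            quadForm_rootMat hσ hγ hs]
          simp [hq]
        · have h' := fun h'' => h ((hST r θ hr).1 h'')
          simp only [Set.indicator_of_notMem h, Set.indicator_of_notMem h', mul_zero]
    _ = _ := by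
        rw [polarCoord_target, Measure.volume_eq_prod, ← Measure.prod_restrict,
          lintegral_prod_mul
            (f := fun r => ENNReal.ofReal r * ENNReal.ofReal (g (r ^ 2))) (by fun_prop)
            (measurable_one.indicator hT).aemeasurable,
          lintegral_indicator_one hT, Measure.restrict_apply hT]

lemma volume_angles {γ : ℝ} (h0 : 0 < γ) (h1 : γ < π / 2) :
    volume ({θ : ℝ | cos γ < |cos θ|} ∩ Set.Ioo (-π) π) = ENNReal.ofReal (4 * γ) := by
  have hset : {θ : ℝ | cos γ < |cos θ|} ∩ Set.Ioo (-π) π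
      = Set.Ioo (-π) (-(π - γ)) ∪ (Set.Ioo (-γ) γ ∪ Set.Ioo (π - γ) π) := by
    ext θ
    have key : |θ| < π → (cos γ < |cos θ| ↔ |θ| < γ ∨ π - γ < |θ|) := by
      intro hθ
      have ht : |θ| ∈ Set.Icc 0 π := ⟨abs_nonneg _, hθ.le⟩
      have e1 : cos γ < cos |θ| ↔ |θ| < γ :=
        strictAntiOn_cos.lt_iff_gt ⟨h0.le, by linarith⟩ ht
      have e2 : cos |θ| < cos (π - γ) ↔ π - γ < |θ| :=
        strictAntiOn_cos.lt_iff_gt ht ⟨by linarith, by linarith⟩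
      rw [cos_abs] at e1 e2
      rw [cos_pi_sub] at e2
      rw [lt_abs, e1, ← e2, lt_neg]
    simp only [Set.mem_inter_iff, Set.mem_ofPred_eq, Set.mem_union, Set.mem_Ioo]
    constructor
    · rintro ⟨h, h2⟩
      rcases (key (abs_lt.2 h2)).1 h with h | h
      · exact Or.inr (Or.inl (abs_lt.1 h))
      · rcases lt_abs.1 h with h | h
        · exact Or.inr (Or.inr ⟨h, h2.2⟩)
        · exact Or.inl ⟨h2.1, by linarith⟩
    · intro h
      have hθ : -π < θ ∧ θ < π := by
        rcases h with h | h | h <;> constructor <;> linarith [h.1, h.2]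
      refine ⟨(key (abs_lt.2 hθ)).2 ?_, hθ⟩
      rcases h with h | h | h
      · exact Or.inr (lt_abs.2 (Or.inr (by linarith [h.2])))
      · exact Or.inl (abs_lt.2 h)
      · exact Or.inr (lt_abs.2 (Or.inl h.1))
  have d1 : Disjoint (Set.Ioo (-γ) γ) (Set.Ioo (π - γ) π) :=
    Set.disjoint_left.2 fun x hx hy => by linarith [hx.2, hy.1]
  have d2 : Disjoint (Set.Ioo (-π) (-(π - γ))) (Set.Ioo (-γ) γ ∪ Set.Ioo (π - γ) π) :=
    Set.disjoint_left.2 fun x hx hy => by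
      rcases hy with hy | hy <;> linarith [hx.2, hy.1]
  rw [hset, measure_union d2 (measurableSet_Ioo.union measurableSet_Ioo),
    measure_union d1 measurableSet_Ioo, Real.volume_Ioo, Real.volume_Ioo, Real.volume_Ioo,
    ← ENNReal.ofReal_add (by linarith) (by linarith),
    ← ENNReal.ofReal_add (by linarith) (by linarith)]
  congr 1
  ring

/-- For `σ > 0`, `ρ ∈ (-1,1)`, `Σ = σ²·[[1,ρ],[ρ,1]]`, and a Borel
probability measure `μ` on `ℝ²` with density `x ↦ g (xᵀ Σ⁻¹ x)` w.r.t. Lebesgue measure,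
the quadrant probability satisfies `μ({x₁x₂ > 0}) = 1/2 + arcsin(ρ)/π`, and equivalently,
writing `P` for this probability, `ρ = -cos(πP)`. -/
theorem stmt16 (σ ρ : ℝ) (hσ : 0 < σ) (hρ : ρ ∈ Set.Ioo (-1 : ℝ) 1)
    (g : ℝ → ℝ) (hg : Measurable g) (hg0 : ∀ t, 0 ≤ g t)
    (μ : Measure (Fin 2 → ℝ)) [IsProbabilityMeasure μ]
    (hμ : μ = volume.withDensity (fun x => ENNReal.ofReal
      (g (x ⬝ᵥ ((σ ^ 2 • !![1, ρ; ρ, 1])⁻¹ *ᵥ x))))) :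
    (μ {x : Fin 2 → ℝ | x 0 * x 1 > 0}).toReal = 1 / 2 + Real.arcsin ρ / π ∧
    ρ = -Real.cos (π * (μ {x : Fin 2 → ℝ | x 0 * x 1 > 0}).toReal) := by
  have hπ := Real.pi_pos
  have hP : (μ {x : Fin 2 → ℝ | x 0 * x 1 > 0}).toReal = 1 / 2 + Real.arcsin ρ / π := by
    have ha0 : 0 < arccos ρ := arccos_pos.2 hρ.2
    have ha1 : arccos ρ < π := by
      rw [arccos]
      linarith [neg_pi_div_two_lt_arcsin.2 hρ.1]
    obtain ⟨γ, hγdef⟩ : ∃ γ, γ = (π - arccos ρ) / 2 := ⟨_, rfl⟩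
    have hγ0 : 0 < γ := by linarith
    have hγ1 : γ < π / 2 := by linarith
    have hγ : ρ = -cos (2 * γ) := by
      rw [show 2 * γ = π - arccos ρ by linarith, cos_pi_sub, cos_arccos hρ.1.le hρ.2.le, neg_neg]
    have hs : sin (2 * γ) ≠ 0 := (sin_pos_of_pos_of_lt_pi (by linarith) (by linarith)).ne'
    have hcos : 0 < cos γ := cos_pos_of_mem_Ioo ⟨by linarith, hγ1⟩
    obtain ⟨K, hK⟩ := exists_angular_const hσ hγ hs hg
    rw [← hμ] at hK
    have huniv := hK Set.univ Set.univ MeasurableSet.univ MeasurableSet.univ (by simp)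
    have hquad := hK {x | x 0 * x 1 > 0} {θ | cos γ < |cos θ|}
      (measurableSet_lt measurable_const (by fun_prop))
      (measurableSet_lt measurable_const (by fun_prop)) (by
        intro r θ hr
        have hprod : (rootMat σ γ *ᵥ ![r * cos θ, r * sin θ]) 0 *
            (rootMat σ γ *ᵥ ![r * cos θ, r * sin θ]) 1
            = (σ * r) ^ 2 * (cos θ ^ 2 - cos γ ^ 2) := by
          simp [rootMat, Matrix.mulVec, dotProduct, Fin.sum_univ_two]
          have e1 := sin_sq θ
          have e2 := sin_sq γ
          linear_combination (σ * r) ^ 2 * (cos θ ^ 2 * e2 - cos γ ^ 2 * e1)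
        rw [Set.mem_ofPred_eq, Set.mem_ofPred_eq, hprod, gt_iff_lt,
          mul_pos_iff_of_pos_left (by positivity), sub_pos, sq_lt_sq, abs_of_pos hcos])
    rw [measure_univ, Set.univ_inter, Real.volume_Ioo] at huniv
    rw [volume_angles hγ0 hγ1] at hquad
    have hK1 := congrArg ENNReal.toReal huniv
    rw [ENNReal.toReal_mul, ENNReal.toReal_ofReal (by linarith), ENNReal.toReal_one] at hK1
    rw [hquad, ENNReal.toReal_mul, ENNReal.toReal_ofReal (by linarith)]
    have hK2 : K.toReal = 1 / (2 * π) := by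
      rw [eq_div_iff (by positivity)]
      linarith
    rw [hK2, hγdef, arccos]
    field_simp
    ring
  refine ⟨hP, ?_⟩
  rw [hP, show π * (1 / 2 + arcsin ρ / π) = arcsin ρ + π / 2 by field_simp; ring,
    cos_add_pi_div_two, sin_arcsin hρ.1.le hρ.2.le, neg_neg]
end

section
/- ∫₀^π (log |cos θ|)² dθ = π·((log 2)² + π²/12); equivalently, (1/(2π))·∫₀^{2π} (log(cos²(θ − φ)))² dθ = 4·((log 2)² + π²/12) for every φ ∈ ℝ. -/
/-!
The value comes from the mean value property of the holomorphic function `log(1 + z)²`, which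
vanishes at `0`. Its integral over each circle `|z| = r < 1` is therefore zero
(`integral_log_one_add_sq`). Letting `r → 1`, the integral over the unit circle is zero too
(`integral_log_one_add_sq_unit`): the convergence is dominated because `cos(θ/2) ≤ |1 + r e^{iθ}| ≤ 2`
bounds the integrand by `log² cos(θ/2)` plus a constant, and `log² cos` is integrable.

On the unit circle `log(1 + e^{2ix}) = log(2 cos x) + i x` for `|x| < π/2`, so the real part of the
limit identity reads `∫ log²(2 cos x) dx = ∫ x² dx` over `(-π/2, π/2)`. Expanding the square and
using `∫ log cos = -π log 2` gives the integral of `log² cos` over one period, and both claims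
follow by `π`-periodicity.
-/

open MeasureTheory Real

/-- The singularity at `0` is controlled by `sin x ≥ x / 2` and `|log y| ≤ 4 y^(-1/4)` on `(0, 1]`,
which bound the integrand by a multiple of `x^(-1/2)`. -/
lemma intervalIntegrable_log_sin_sq_half :
    IntervalIntegrable (fun x => (log (sin x)) ^ 2) volume 0 (π / 2) := by
  have hb : IntervalIntegrable (fun x : ℝ => 16 * (x ^ (-(1 / 2) : ℝ) / 2 ^ (-(1 / 2) : ℝ)))
      volume 0 (π / 2) :=
    ((intervalIntegral.intervalIntegrable_rpow' (by norm_num)).div_const _).const_mul _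
  refine hb.mono_fun ?_ ?_
  · exact (by fun_prop : Measurable fun x => (log (sin x)) ^ 2).aestronglyMeasurable
  · rw [Set.uIoc_of_le (by positivity)]
    filter_upwards [ae_restrict_mem measurableSet_Ioc] with x hx
    have hx0 : 0 < x := hx.1
    have hs : x / 2 ≤ sin x := by
      refine le_trans ?_ (mul_le_sin hx0.le hx.2)
      rw [div_mul_eq_mul_div, div_le_div_iff₀ two_pos pi_pos]
      nlinarith [pi_lt_four]
    have h1 : x / 2 ≤ 1 := hs.trans (sin_le_one x)
    have hl : log (x / 2) ≤ log (sin x) := log_le_log (by positivity) hs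
    have hl0 : log (sin x) ≤ 0 := log_nonpos (by linarith) (sin_le_one x)
    have hk := abs_log_mul_self_rpow_lt (x / 2) (1 / 4) (by positivity) h1 (by norm_num)
    rw [← div_rpow hx0.le zero_le_two, norm_of_nonneg (by positivity),
      norm_of_nonneg (by positivity), rpow_neg (by positivity), ← div_eq_mul_inv,
      le_div_iff₀ (by positivity)]
    have hp : (x / 2) ^ (1 / 2 : ℝ) = ((x / 2) ^ (1 / 4 : ℝ)) ^ 2 := by
      rw [← rpow_natCast, ← rpow_mul (by positivity)]; norm_num
    calc log (sin x) ^ 2 * (x / 2) ^ (1 / 2 : ℝ)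
        ≤ log (x / 2) ^ 2 * (x / 2) ^ (1 / 2 : ℝ) := by gcongr ?_ * _; nlinarith
      _ = |log (x / 2) * (x / 2) ^ (1 / 4 : ℝ)| ^ 2 := by rw [hp, sq_abs]; ring
      _ ≤ (1 / (1 / 4)) ^ 2 := by gcongr
      _ = 16 := by norm_num

lemma periodic_log_cos_sq : Function.Periodic (fun x => (log (cos x)) ^ 2) π := fun x => by
  simp [cos_add_pi]

lemma intervalIntegrable_log_cos_sq (a b : ℝ) :
    IntervalIntegrable (fun x => (log (cos x)) ^ 2) volume a b := by
  have h1 : IntervalIntegrable (fun x => (log (cos x)) ^ 2) volume 0 (π / 2) := by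
    have := (intervalIntegrable_log_sin_sq_half.comp_sub_left (π / 2)).symm
    simpa [sin_pi_div_two_sub] using this
  have h2 : IntervalIntegrable (fun x => (log (cos x)) ^ 2) volume (-(π / 2)) 0 := by
    have := ((IntervalIntegrable.iff_comp_neg).1 h1).symm
    simpa using this
  refine periodic_log_cos_sq.intervalIntegrable pi_pos.ne' (t := -(π / 2)) ?_ a b
  convert h2.trans h1 using 1
  ring

/-- The mean value property of `log(1 + z)²` at `0`, on a circle inside the unit disc. -/
lemma integral_log_one_add_sq {r : ℝ} (h0 : 0 < r) (h1 : r < 1) :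
    ∫ θ in (-π)..π, (Complex.log (1 + circleMap 0 r θ)) ^ 2 = 0 := by
  have hd : DiffContOnCl ℂ (fun z : ℂ => (Complex.log (1 + z)) ^ 2) (Metric.ball 0 |r|) := by
    apply DifferentiableOn.diffContOnCl
    rw [closure_ball _ (by positivity), abs_of_pos h0]
    intro z hz
    have hz' : ‖z‖ < 1 := (mem_closedBall_zero_iff.1 hz).trans_lt h1
    have := Complex.mem_slitPlane_of_norm_lt_one hz'
    exact (((differentiableAt_id.const_add 1).clog this).pow 2).differentiableWithinAt
  have hm := hd.circleAverage
  rw [circleAverage_def] at hm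
  have hp : Function.Periodic (fun θ => (Complex.log (1 + circleMap 0 r θ)) ^ 2) (2 * π) :=
    fun θ => by simp only [periodic_circleMap 0 r θ]
  have := hp.intervalIntegral_add_eq (-π) 0
  rw [show -π + 2 * π = π by ring, zero_add] at this
  rw [this]
  simpa [pi_ne_zero] using hm

lemma cos_half_pos {θ : ℝ} (h : θ ∈ Set.Ioo (-π) π) : 0 < cos (θ / 2) :=
  cos_pos_of_mem_Ioo ⟨by linarith [h.1], by linarith [h.2]⟩

lemma one_add_circleMap_one (θ : ℝ) :
    1 + circleMap 0 1 θ = ((2 * cos (θ / 2) : ℝ) : ℂ) * Complex.exp ((θ / 2 : ℝ) * Complex.I) := by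
  apply Complex.ext
  · have := cos_sq (θ / 2)
    rw [mul_div_cancel₀ _ two_ne_zero] at this
    rw [Complex.re_ofReal_mul, Complex.exp_ofReal_mul_I_re]
    simp [circleMap, Complex.exp_ofReal_mul_I_re]
    linear_combination -2 * this
  · have := sin_two_mul (θ / 2)
    rw [mul_div_cancel₀ _ two_ne_zero] at this
    rw [Complex.im_ofReal_mul, Complex.exp_ofReal_mul_I_im]
    simp [circleMap, Complex.exp_ofReal_mul_I_im]
    linear_combination this

lemma log_one_add_circleMap_one {θ : ℝ} (h : θ ∈ Set.Ioo (-π) π) :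
    Complex.log (1 + circleMap 0 1 θ)
      = (log (2 * cos (θ / 2)) : ℝ) + (θ / 2 : ℝ) * Complex.I := by
  have hc := cos_half_pos h
  rw [one_add_circleMap_one, Complex.log_ofReal_mul (by positivity) (Complex.exp_ne_zero _),
    Complex.log_exp]
  · simp; linarith [h.1, pi_pos]
  · simp; linarith [h.2, pi_pos]

/-- This holds since `|1 + r e^{iθ}|² = (1 - r)² + 4 r cos²(θ/2)`. -/
lemma cos_half_le_norm {r θ : ℝ} (h0 : 0 < r) (h : θ ∈ Set.Ioo (-π) π) :
    cos (θ / 2) ≤ ‖1 + circleMap 0 r θ‖ := by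
  rw [← abs_of_pos (cos_half_pos h), ← abs_of_nonneg (norm_nonneg _), ← sq_le_sq,
    ← Complex.normSq_eq_norm_sq, Complex.normSq_apply]
  have h2 := cos_sq (θ / 2)
  rw [mul_div_cancel₀ _ two_ne_zero] at h2
  have h3 := sin_sq_add_cos_sq θ
  simp [circleMap, Complex.exp_ofReal_mul_I_re, Complex.exp_ofReal_mul_I_im]
  have h4 : cos θ = 2 * cos (θ / 2) ^ 2 - 1 := by linarith
  have : (1 + r * cos θ) * (1 + r * cos θ) + r * sin θ * (r * sin θ)
    = (1 - r) ^ 2 + 4 * r * cos (θ / 2) ^ 2 := by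
    linear_combination r ^ 2 * h3 + 2 * r * h4
  rw [this]
  have h5 := cos_sq_le_one (θ / 2)
  have h6 := sq_nonneg (cos (θ / 2))
  nlinarith [mul_nonneg (sq_nonneg (1 - r)) (sub_nonneg.2 h5), mul_nonneg h0.le h6,
    mul_nonneg (mul_nonneg h0.le h6) h0.le]

/-- The `r`-independent bound that dominates `log(1 + r e^{iθ})²` as `r → 1`. -/
lemma norm_log_sq_le {r θ : ℝ} (h0 : 0 < r) (h1 : r ≤ 1) (h : θ ∈ Set.Ioo (-π) π) :
    ‖(Complex.log (1 + circleMap 0 r θ)) ^ 2‖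
      ≤ log (cos (θ / 2)) ^ 2 + (log 2 ^ 2 + π ^ 2) := by
  have hc := cos_half_pos h
  have hl := cos_half_le_norm h0 h
  have hu : ‖1 + circleMap 0 r θ‖ ≤ 2 := by
    refine (norm_add_le _ _).trans ?_
    simp [abs_of_pos h0]; linarith
  have a1 := log_le_log hc hl
  have a2 := log_le_log (hc.trans_le hl) hu
  have a3 := sq_le_sq' (Complex.neg_pi_lt_arg (1 + circleMap 0 r θ)).le (Complex.arg_le_pi _)
  rw [norm_pow, ← Complex.normSq_eq_norm_sq, Complex.normSq_apply, Complex.log_re, Complex.log_im]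
  have a4 : log ‖1 + circleMap 0 r θ‖ ^ 2 ≤ log (cos (θ / 2)) ^ 2 + log 2 ^ 2 := by
    rcases le_total 0 (log ‖1 + circleMap 0 r θ‖) with h | h <;>
      nlinarith [sq_nonneg (log (cos (θ / 2))), sq_nonneg (log 2)]
  nlinarith

/-- The mean value property persists on the unit circle, although `log(1 + z)²` is singular
at `z = -1`. -/
lemma integral_log_one_add_sq_unit : ∫ θ in (-π)..π, (Complex.log (1 + circleMap 0 1 θ)) ^ 2 = 0 := by
  have hae : ∀ᵐ θ : ℝ, θ ∈ Set.uIoc (-π) π → θ ∈ Set.Ioo (-π) π := by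
    filter_upwards [compl_mem_ae_iff.2 (measure_singleton π)] with θ hθ hm
    rw [Set.uIoc_of_le (by linarith [pi_pos])] at hm
    exact ⟨hm.1, lt_of_le_of_ne hm.2 hθ⟩
  have hr : ∀ᶠ r : ℝ in nhdsWithin 1 (Set.Iio 1), r ∈ Set.Ioo (0 : ℝ) 1 :=
    Ioo_mem_nhdsLT one_pos
  have ht : Filter.Tendsto
      (fun r : ℝ => ∫ θ in (-π)..π, (Complex.log (1 + circleMap 0 r θ)) ^ 2)
      (nhdsWithin 1 (Set.Iio 1))
      (nhds (∫ θ in (-π)..π, (Complex.log (1 + circleMap 0 1 θ)) ^ 2)) := by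
    refine intervalIntegral.tendsto_integral_filter_of_dominated_convergence
      (fun θ => log (cos (θ / 2)) ^ 2 + (log 2 ^ 2 + π ^ 2)) ?_ ?_ ?_ ?_
    · refine Filter.Eventually.of_forall fun r => ?_
      have : Measurable fun θ : ℝ => circleMap 0 r θ := (continuous_circleMap 0 r).measurable
      exact (by fun_prop : Measurable fun θ : ℝ =>
        (Complex.log (1 + circleMap 0 r θ)) ^ 2).aestronglyMeasurable
    · filter_upwards [hr] with r hr
      filter_upwards [hae] with θ hθ hm
      exact norm_log_sq_le hr.1 hr.2.le (hθ hm)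
    · refine IntervalIntegrable.add ?_ intervalIntegrable_const
      have := (intervalIntegrable_log_cos_sq (-(π / 2)) (π / 2)).comp_mul_right (c := 1 / 2)
      convert this using 1
      · ext; ring_nf
      · ring
      · ring
    · filter_upwards [hae] with θ hθ hm
      have hc := cos_half_pos (hθ hm)
      have hs : 1 + circleMap 0 1 θ ∈ Complex.slitPlane := by
        left
        rw [one_add_circleMap_one, Complex.re_ofReal_mul, Complex.exp_ofReal_mul_I_re]
        positivity
      have : ContinuousAt (fun r : ℝ => (Complex.log (1 + circleMap 0 r θ)) ^ 2) 1 := by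
        refine ContinuousAt.pow (ContinuousAt.clog (f := fun r : ℝ => 1 + circleMap 0 r θ) ?_ hs) 2
        unfold circleMap
        fun_prop
      exact this.tendsto.mono_left nhdsWithin_le_nhds
  refine tendsto_nhds_unique ht (tendsto_const_nhds.congr' ?_)
  filter_upwards [hr] with r hr
  exact (integral_log_one_add_sq hr.1 hr.2).symm

lemma integral_log_cos : ∫ x in (-(π / 2))..(π / 2), log (cos x) = -log 2 * π := by
  have := intervalIntegral.integral_comp_add_right (a := -(π / 2)) (b := π / 2)
    (fun x => log (sin x)) (π / 2)
  simp only [sin_add_pi_div_two] at this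
  rw [this, ← integral_log_sin_zero_pi]
  congr 1 <;> ring

lemma integral_log_cos_sq : ∫ x in (-(π / 2))..(π / 2), log (cos x) ^ 2
    = π * (log 2 ^ 2 + π ^ 2 / 12) := by
  have hae : ∀ᵐ x : ℝ, x ∈ Set.uIoc (-(π / 2)) (π / 2) → x ∈ Set.Ioo (-(π / 2)) (π / 2) := by
    filter_upwards [compl_mem_ae_iff.2 (measure_singleton (π / 2))] with θ hθ hm
    rw [Set.uIoc_of_le (by linarith [pi_pos])] at hm
    exact ⟨hm.1, lt_of_le_of_ne hm.2 hθ⟩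
  have hsub := intervalIntegral.integral_comp_mul_right (a := -(π / 2)) (b := π / 2)
    (fun θ => (Complex.log (1 + circleMap 0 1 θ)) ^ 2) (c := 2) two_ne_zero
  rw [show -(π / 2) * 2 = -π by ring, show π / 2 * 2 = π by ring, integral_log_one_add_sq_unit, smul_zero] at hsub
  have i1 := intervalIntegrable_log_cos_sq (-(π / 2)) (π / 2)
  have i2 : IntervalIntegrable (fun x => log (cos x)) volume (-(π / 2)) (π / 2) :=
    intervalIntegrable_log_cos
  have hint : IntervalIntegrable (fun x => (Complex.log (1 + circleMap 0 1 (x * 2))) ^ 2)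
      volume (-(π / 2)) (π / 2) := by
    refine (i1.add (intervalIntegrable_const (c := log 2 ^ 2 + π ^ 2))).mono_fun ?_ ?_
    · have : Measurable fun θ : ℝ => circleMap 0 1 θ := (continuous_circleMap 0 1).measurable
      exact (by fun_prop : Measurable fun x : ℝ =>
        (Complex.log (1 + circleMap 0 1 (x * 2))) ^ 2).aestronglyMeasurable
    · filter_upwards [ae_restrict_of_ae hae, ae_restrict_mem measurableSet_uIoc] with x hx hm
      have hx := hx hm
      have := norm_log_sq_le (r := 1) (θ := x * 2) one_pos le_rfl
        ⟨by linarith [hx.1], by linarith [hx.2]⟩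
      rw [mul_div_cancel_right₀ _ two_ne_zero] at this
      exact this.trans (le_abs_self _)
  -- The real part of the integral over the unit circle, with `θ = 2x` and `log²(2 cos x)` expanded.
  have hre : ∫ x in (-(π / 2))..(π / 2),
      (log (cos x) ^ 2 + (2 * log 2) * log (cos x) + (log 2 ^ 2 - x ^ 2)) = 0 := by
    have hcl := Complex.reCLM.intervalIntegral_comp_comm hint
    rw [hsub, map_zero] at hcl
    rw [← hcl]
    refine intervalIntegral.integral_congr_ae ?_
    filter_upwards [hae] with x hx hm
    have hx := hx hm
    have hc := cos_pos_of_mem_Ioo hx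
    rw [log_one_add_circleMap_one ⟨by linarith [hx.1], by linarith [hx.2]⟩,
      mul_div_cancel_right₀ _ two_ne_zero, log_mul two_ne_zero hc.ne']
    rw [Complex.reCLM_apply, pow_two (_ + _ : ℂ), Complex.mul_re]
    simp only [Complex.add_re, Complex.add_im, Complex.ofReal_re, Complex.ofReal_im,
      Complex.re_ofReal_mul, Complex.im_ofReal_mul, Complex.I_re, Complex.I_im]
    ring
  have i3 : IntervalIntegrable (fun x : ℝ => log 2 ^ 2 - x ^ 2) volume (-(π / 2)) (π / 2) :=
    Continuous.intervalIntegrable (by fun_prop) _ _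
  rw [intervalIntegral.integral_add (i1.add (i2.const_mul _)) i3,
    intervalIntegral.integral_add i1 (i2.const_mul _), intervalIntegral.integral_const_mul,
    integral_log_cos, intervalIntegral.integral_sub (by simp) (by simp)] at hre
  simp at hre
  linear_combination hre

/-- `∫₀^π (log|cos θ|)² dθ = π((log 2)² + π²/12)`; equivalently,
`(1/(2π))·∫₀^{2π} (log cos²(θ-φ))² dθ = 4((log 2)² + π²/12)` for every `φ`. -/
theorem stmt17 :
    (∫ θ in Set.Ioo (0 : ℝ) π, (Real.log |Real.cos θ|) ^ 2)
      = π * ((Real.log 2) ^ 2 + π ^ 2 / 12) ∧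
    ∀ φ : ℝ,
      (1 / (2 * π)) * ∫ θ in Set.Ioo (0 : ℝ) (2 * π), (Real.log ((Real.cos (θ - φ)) ^ 2)) ^ 2
        = 4 * ((Real.log 2) ^ 2 + π ^ 2 / 12) := by
  have key (t : ℝ) : ∫ x in t..t + π, log (cos x) ^ 2 = π * (log 2 ^ 2 + π ^ 2 / 12) := by
    rw [periodic_log_cos_sq.intervalIntegral_add_eq t (-(π / 2)), ← integral_log_cos_sq]
    congr 1; ring
  refine ⟨?_, fun φ => ?_⟩
  · rw [← integral_Ioc_eq_integral_Ioo, ← intervalIntegral.integral_of_le pi_pos.le]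
    simpa using key 0
  · rw [← integral_Ioc_eq_integral_Ioo, ← intervalIntegral.integral_of_le (by positivity)]
    have h2 := periodic_log_cos_sq.intervalIntegral_add_zsmul_eq 2 (-φ)
      intervalIntegrable_log_cos_sq
    rw [key] at h2
    have h3 := intervalIntegral.integral_comp_sub_right (a := 0) (b := 2 * π)
      (fun x => log (cos x) ^ 2) φ
    rw [show (0 : ℝ) - φ = -φ by ring, show 2 * π - φ = -φ + (2 : ℤ) • π by simp; ring, h2] at h3
    simp only [log_pow, mul_pow, intervalIntegral.integral_const_mul, h3]
    have := pi_ne_zero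
    simp
    field_simp
    norm_num
end
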